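/- arXiv:2009.08967 — 6 statements merged into one kernel-verified Lean document; each statement's English description precedes it below -/
import Mathlib

section
/- Fix a natural number n ≥ 2 and, for every nonempty subset F of {1,...,n}, a real number δ_F > 0. For every η > 0 there exists a positive integer d = d(n, (δ_F), η) such that for every finite d-quasirandom group G and every family of subsets A_F ⊆ G with |A_F| ≥ δ_F·|G| for each nonempty F ⊆ {1,...,n}, the set X_n = {(a_1,...,a_n) ∈ G^n : a_F ∈ A_F for all nonempty F ⊆ {1,...,n}} satisfies |X_n| ≥ (1−η)·(∏_F |A_F|)/|G|^{2^n−1−n}. -/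
/-- A group `G` is `d`-quasirandom if every non-trivial finite-dimensional complex
representation of `G` has degree at least `d`. -/
def IsQuasirandom (G : Type*) [Group G] (d : ℕ) : Prop :=
  ∀ (V : Type) [AddCommGroup V] [Module ℂ V] [FiniteDimensional ℂ V],
    ∀ ρ : G →* LinearMap.GeneralLinearGroup ℂ V, ρ ≠ 1 → d ≤ Module.finrank ℂ V

/-- The product of the `a i` with `i ∈ F`, taken with indices in increasing order. -/
def prodF {G : Type*} [Monoid G] {n : ℕ} (a : Fin n → G) (F : Finset (Fin n)) : G :=
  ((F.sort (· ≤ ·)).map a).prod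

/-!
For `g` of mean zero on a `d`-quasirandom group, let `K` be the operator on `L²(G)` with kernel
`g (x * y)`. The positive operator `K† K` commutes with the left regular representation and kills
its invariant vectors, so each nonzero eigenvalue has multiplicity at least `d` and hence is at
most `tr (K† K) / d`. This gives the mixing estimate: for `1`-bounded `f` and `g`, the average over
`x` of `|𝔼 y, f y * g (x * y) - (𝔼 f) * (𝔼 g)|` is at most `1 / √d`.

For `1`-bounded functions `f_F`, the average of `∏ F, f_F (a_F)` over `a` differs from
`∏ F, 𝔼 f_F` by at most `(2 ^ n - 1 - n) / √d`, by induction on `n`: freeze the first coordinate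
`x` and apply the case `n` to the functions `y ↦ f_{1 + F} y * f_{ {1} ∪ (1 + F)} (x * y)`. On
average over `x`, the mixing estimate replaces each of their `2 ^ n - 1` means by a product of two
means at a cost of `1 / √d`.
-/

open Finset Module
open scoped BigOperators InnerProductSpace

theorem norm_prod_sub_prod_le_sum_norm_sub {R ι : Type*} [NormedCommRing R] [NormOneClass R]
    {s : Finset ι} {a b : ι → R} (ha : ∀ i ∈ s, ‖a i‖ ≤ 1) (hb : ∀ i ∈ s, ‖b i‖ ≤ 1) :
    ‖∏ i ∈ s, a i - ∏ i ∈ s, b i‖ ≤ ∑ i ∈ s, ‖a i - b i‖ := by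
  induction s using Finset.cons_induction with
  | empty => simp
  | cons j s hj ih =>
    simp only [mem_cons, forall_eq_or_imp] at ha hb
    rw [prod_cons, prod_cons, sum_cons]
    have hprod : ‖∏ i ∈ s, a i‖ ≤ 1 :=
      (s.norm_prod_le a).trans (prod_le_one (fun i _ ↦ norm_nonneg _) ha.2)
    calc ‖a j * ∏ i ∈ s, a i - b j * ∏ i ∈ s, b i‖
        = ‖(a j - b j) * ∏ i ∈ s, a i + b j * (∏ i ∈ s, a i - ∏ i ∈ s, b i)‖ := by ring_nf
      _ ≤ ‖a j - b j‖ * ‖∏ i ∈ s, a i‖ + ‖b j‖ * ‖∏ i ∈ s, a i - ∏ i ∈ s, b i‖ :=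
        (norm_add_le _ _).trans (add_le_add (norm_mul_le _ _) (norm_mul_le _ _))
      _ ≤ ‖a j - b j‖ * 1 + 1 * ∑ i ∈ s, ‖a i - b i‖ := by
        gcongr
        exacts [hb.1, ih ha.2 hb.2]
      _ = ‖a j - b j‖ + ∑ i ∈ s, ‖a i - b i‖ := by ring

theorem norm_expect_le_of_norm_le {𝕜 ι : Type*} [RCLike 𝕜] [Fintype ι] [Nonempty ι] {f : ι → 𝕜}
    {c : ℝ} (hf : ∀ i, ‖f i‖ ≤ c) : ‖𝔼 i, f i‖ ≤ c :=
  (RCLike.norm_expect_le (K := 𝕜)).trans (expect_le univ_nonempty fun i _ ↦ hf i)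

theorem sum_norm_sub_expect_sq_le {ι E : Type*} [Fintype ι] [NormedAddCommGroup E]
    [InnerProductSpace ℝ E] [Module ℚ≥0 E] (f : ι → E) :
    ∑ i, ‖f i - 𝔼 j, f j‖ ^ 2 ≤ ∑ i, ‖f i‖ ^ 2 := by
  set m := 𝔼 j, f j
  have hinner : ∑ i, ⟪f i, m⟫_ℝ = Fintype.card ι * ‖m‖ ^ 2 := by
    rw [← sum_inner, ← Fintype.card_smul_expect, ← Nat.cast_smul_eq_nsmul ℝ, real_inner_smul_left,
      real_inner_self_eq_norm_sq]
  calc ∑ i, ‖f i - m‖ ^ 2 = ∑ i, ‖f i‖ ^ 2 - Fintype.card ι * ‖m‖ ^ 2 := by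
        simp only [norm_sub_sq_real, sum_add_distrib, sum_sub_distrib, ← mul_sum, hinner,
          sum_const, card_univ, nsmul_eq_mul]
        ring
    _ ≤ ∑ i, ‖f i‖ ^ 2 := sub_le_self _ (by positivity)

section Spectral

variable {𝕜 E : Type*} [RCLike 𝕜] [NormedAddCommGroup E] [InnerProductSpace 𝕜 E]
  [FiniteDimensional 𝕜 E] {T : E →ₗ[𝕜] E}

theorem finrank_eigenspace_mul_le_re_trace (hT : T.IsPositive) (μ : ℝ) :
    finrank 𝕜 (End.eigenspace T (μ : 𝕜)) * μ ≤ RCLike.re (T.trace 𝕜 E) := by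
  let eig := hT.isSymmetric.eigenvalues rfl
  calc finrank 𝕜 (End.eigenspace T (μ : 𝕜)) * μ = ∑ j with (eig j : 𝕜) = μ, μ := by
        rw [sum_const, nsmul_eq_mul, ← hT.isSymmetric.card_filter_eigenvalues_eq rfl]
    _ = ∑ j with (eig j : 𝕜) = μ, eig j :=
        sum_congr rfl fun j hj ↦ by exact_mod_cast (mem_filter.mp hj).2.symm
    _ ≤ ∑ j, eig j := sum_le_univ_sum_of_nonneg (hT.nonneg_eigenvalues rfl)
    _ = RCLike.re (T.trace 𝕜 E) := (hT.isSymmetric.re_trace_eq_sum_eigenvalues rfl).symm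

theorem re_inner_apply_self_eq_sum_eigenvalues (hT : T.IsSymmetric) (v : E) :
    RCLike.re ⟪T v, v⟫_𝕜 =
      ∑ i, hT.eigenvalues rfl i * ‖⟪hT.eigenvectorBasis rfl i, v⟫_𝕜‖ ^ 2 := by
  rw [← (hT.eigenvectorBasis rfl).sum_inner_mul_inner, map_sum]
  refine sum_congr rfl fun i _ ↦ ?_
  rw [hT, hT.apply_eigenvectorBasis, inner_smul_right, mul_assoc, RCLike.re_ofReal_mul,
    inner_mul_symm_re_eq_norm, norm_mul, norm_inner_symm v, sq]

theorem mul_re_inner_apply_self_le_re_trace_mul (hT : T.IsPositive) {d : ℕ}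
    (hd : ∀ μ ≠ 0, End.HasEigenvalue T μ → d ≤ finrank 𝕜 (End.eigenspace T μ)) (v : E) :
    d * RCLike.re ⟪T v, v⟫_𝕜 ≤ RCLike.re (T.trace 𝕜 E) * ‖v‖ ^ 2 := by
  let b := hT.isSymmetric.eigenvectorBasis rfl
  let eig := hT.isSymmetric.eigenvalues rfl
  have heig_nonneg (i) : 0 ≤ eig i := hT.nonneg_eigenvalues rfl i
  have heig_le (i) : d * eig i ≤ RCLike.re (T.trace 𝕜 E) := by
    refine le_trans ?_ (finrank_eigenspace_mul_le_re_trace hT (eig i))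
    rcases eq_or_ne (eig i) 0 with h0 | h0
    · simp [h0]
    · have := heig_nonneg i
      gcongr
      exact hd _ (by exact_mod_cast h0) (hT.isSymmetric.hasEigenvalue_eigenvalues rfl i)
  rw [re_inner_apply_self_eq_sum_eigenvalues hT.isSymmetric, ← b.sum_sq_norm_inner_right v,
    mul_sum, mul_sum]
  refine sum_le_sum fun i _ ↦ ?_
  rw [← mul_assoc]
  exact mul_le_mul_of_nonneg_right (heig_le i) (by positivity)

end Spectral

namespace IsQuasirandom

variable {G : Type*} [Group G] {d : ℕ}

section Representation

variable {V : Type*} [AddCommGroup V] [Module ℂ V] [FiniteDimensional ℂ V]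
  {ρ : Representation ℂ G V}

-- `IsQuasirandom` only speaks of representations on `V : Type`; transport along coordinates removes
-- the universe restriction.
theorem le_finrank (hG : IsQuasirandom G d) (hρ : ρ ≠ 1) : d ≤ finrank ℂ V := by
  let e : V ≃ₗ[ℂ] (Fin (finrank ℂ V) → ℂ) := (finBasis ℂ V).equivFun
  let conj := LinearMap.GeneralLinearGroup.congrLinearEquiv e
  have hσ : conj.toMonoidHom.comp ρ.toHomUnits ≠ 1 := fun h ↦ hρ <| MonoidHom.ext fun g ↦
    congrArg Units.val (conj.map_eq_one_iff.mp (DFunLike.congr_fun h g))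
  simpa only [finrank_fin_fun] using hG _ _ hσ

theorem le_finrank_eigenspace (hG : IsQuasirandom G d) {T : End ℂ V}
    (hcomm : ∀ g, Commute T (ρ g)) (hinv : ρ.invariants ≤ T.ker) {μ : ℂ} (hμ : μ ≠ 0)
    (hT : T.HasEigenvalue μ) : d ≤ finrank ℂ (T.eigenspace μ) := by
  refine hG.le_finrank (ρ := ρ.subrepresentation (T.eigenspace μ) fun g ↦
    T.mapsTo_genEigenspace_of_comm (hcomm g) μ 1) fun htriv ↦ ?_
  obtain ⟨v, hv, hv0⟩ := hT.exists_hasEigenvector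
  have hfixed : v ∈ ρ.invariants := fun g ↦
    congrArg Subtype.val (LinearMap.congr_fun (DFunLike.congr_fun htriv g) ⟨v, hv⟩)
  have hTv : μ • v = 0 := (End.mem_eigenspace_iff.mp hv).symm.trans (hinv hfixed)
  exact smul_ne_zero hμ hv0 hTv

end Representation

end IsQuasirandom

section Translation

variable {G : Type*} [Group G] [Fintype G]

variable (G) in
/-- The left regular representation of `G` on `L²(G)`. -/
noncomputable def leftTranslation : Representation ℂ G (EuclideanSpace ℂ G) where
  toFun h := (LinearIsometryEquiv.piLpCongrLeft 2 ℂ ℂ (Equiv.mulLeft h)).toLinearMap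
  map_one' := by ext; simp [LinearIsometryEquiv.piLpCongrLeft_apply, ← Equiv.Perm.inv_def]
  map_mul' h k := by ext; simp [LinearIsometryEquiv.piLpCongrLeft_apply, Equiv.Perm.mul_def]

theorem leftTranslation_apply (h : G) (v : EuclideanSpace ℂ G) (y : G) :
    leftTranslation G h v y = v (h⁻¹ * y) := rfl

theorem inner_leftTranslation_leftTranslation (h : G) (u v : EuclideanSpace ℂ G) :
    ⟪leftTranslation G h u, leftTranslation G h v⟫_ℂ = ⟪u, v⟫_ℂ :=
  (LinearIsometryEquiv.piLpCongrLeft 2 ℂ ℂ (Equiv.mulLeft h)).inner_map_map u v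

theorem apply_eq_of_mem_invariants_leftTranslation {v : EuclideanSpace ℂ G}
    (hv : v ∈ (leftTranslation G).invariants) (x : G) : v x = v 1 := by
  simpa [leftTranslation_apply] using congrArg (fun w : EuclideanSpace ℂ G ↦ w x) (hv x).symm

/-- The operator on `L²(G)` with kernel `g (x * y)`, for the counting measure on `G`. -/
noncomputable def correlation (g : G → ℂ) : EuclideanSpace ℂ G →ₗ[ℂ] EuclideanSpace ℂ G :=
  open Classical in (Matrix.of fun x y ↦ g (x * y)).toEuclideanLin

theorem correlation_apply (g : G → ℂ) (v : EuclideanSpace ℂ G) (x : G) :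
    correlation g v x = ∑ y, g (x * y) * v y := rfl

theorem correlation_leftTranslation_apply (g : G → ℂ) (h : G) (v : EuclideanSpace ℂ G) (x : G) :
    correlation g (leftTranslation G h v) x = correlation g v (x * h) := by
  simp only [correlation_apply, leftTranslation_apply]
  exact Fintype.sum_equiv (Equiv.mulLeft h⁻¹) _ _ fun y ↦ by simp [mul_assoc]

theorem inner_correlation_leftTranslation (g : G → ℂ) (h : G) (u v : EuclideanSpace ℂ G) :
    ⟪correlation g (leftTranslation G h u), correlation g (leftTranslation G h v)⟫_ℂ =
      ⟪correlation g u, correlation g v⟫_ℂ := by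
  simp only [PiLp.inner_apply, correlation_leftTranslation_apply]
  exact Equiv.sum_comp (Equiv.mulRight h) fun x ↦ ⟪correlation g u x, correlation g v x⟫_ℂ

theorem commute_adjoint_correlation_comp_leftTranslation (g : G → ℂ) (h : G) :
    Commute (LinearMap.adjoint (correlation g) ∘ₗ correlation g) (leftTranslation G h) := by
  refine LinearMap.ext fun v ↦ ext_inner_left ℂ fun w ↦ ?_
  obtain ⟨u, rfl⟩ : ∃ u, leftTranslation G h u = w :=
    ⟨leftTranslation G h⁻¹ w, (leftTranslation G).self_inv_apply h w⟩
  simp only [Module.End.mul_apply, LinearMap.comp_apply, LinearMap.adjoint_inner_right,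
    inner_correlation_leftTranslation, inner_leftTranslation_leftTranslation]

theorem invariants_leftTranslation_le_ker_correlation {g : G → ℂ} (hg : ∑ x, g x = 0) :
    (leftTranslation G).invariants ≤ (correlation g).ker := by
  refine fun v hv ↦ LinearMap.mem_ker.mpr <| PiLp.ext fun x ↦ ?_
  have hsum : ∑ y, g (x * y) = 0 := (Equiv.sum_comp (Equiv.mulLeft x) g).trans hg
  simp only [correlation_apply, apply_eq_of_mem_invariants_leftTranslation hv, ← sum_mul, hsum,
    zero_mul, PiLp.zero_apply]

theorem re_trace_adjoint_correlation_comp (g : G → ℂ) :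
    RCLike.re ((LinearMap.adjoint (correlation g) ∘ₗ correlation g).trace ℂ _) =
      Fintype.card G * ∑ x, ‖g x‖ ^ 2 := by
  classical
  have hcol (y : G) :
      ‖correlation g (EuclideanSpace.basisFun G ℂ y)‖ ^ 2 = ∑ x, ‖g x‖ ^ 2 := by
    rw [EuclideanSpace.norm_sq_eq, ← Equiv.sum_comp (Equiv.mulRight y) fun x ↦ ‖g x‖ ^ 2]
    simp [correlation_apply]
  rw [LinearMap.trace_eq_sum_inner _ (EuclideanSpace.basisFun G ℂ), map_sum]
  simp only [LinearMap.comp_apply, LinearMap.adjoint_inner_right, inner_self_eq_norm_sq, hcol,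
    sum_const, card_univ, nsmul_eq_mul]

end Translation

namespace IsQuasirandom

variable {G : Type*} [Group G] [Fintype G] {d : ℕ}

theorem mul_sum_norm_sum_mul_sq_le (hG : IsQuasirandom G d) {g : G → ℂ} (hg : ∑ x, g x = 0)
    (f : G → ℂ) :
    d * ∑ x, ‖∑ y, g (x * y) * f y‖ ^ 2 ≤
      Fintype.card G * (∑ x, ‖g x‖ ^ 2) * ∑ x, ‖f x‖ ^ 2 := by
  let K := correlation g
  have hinv : (leftTranslation G).invariants ≤ (LinearMap.adjoint K ∘ₗ K).ker :=
    (invariants_leftTranslation_le_ker_correlation hg).trans (LinearMap.ker_le_ker_comp _ _)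
  have hbound := mul_re_inner_apply_self_le_re_trace_mul K.isPositive_adjoint_comp_self
    (fun μ hμ ↦ hG.le_finrank_eigenspace
      (commute_adjoint_correlation_comp_leftTranslation g) hinv hμ) (WithLp.toLp 2 f)
  rwa [LinearMap.comp_apply, LinearMap.adjoint_inner_left, inner_self_eq_norm_sq,
    re_trace_adjoint_correlation_comp, EuclideanSpace.norm_sq_eq,
    EuclideanSpace.norm_sq_eq] at hbound

theorem sqrt_mul_sum_norm_sum_mul_le (hG : IsQuasirandom G d) {g : G → ℂ} (hg : ∑ x, g x = 0)
    (f : G → ℂ) :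
    √d * ∑ x, ‖∑ y, g (x * y) * f y‖ ≤
      Fintype.card G * (√(∑ x, ‖g x‖ ^ 2) * √(∑ x, ‖f x‖ ^ 2)) := by
  let D (x : G) : ℝ := ‖∑ y, g (x * y) * f y‖
  refine le_of_sq_le_sq ?_ (by positivity)
  calc (√d * ∑ x, D x) ^ 2 = d * (∑ x, D x) ^ 2 := by
        rw [mul_pow, Real.sq_sqrt (Nat.cast_nonneg d)]
    _ ≤ d * (Fintype.card G * ∑ x, D x ^ 2) := by
        gcongr
        exact sq_sum_le_card_mul_sum_sq
    _ = Fintype.card G * (d * ∑ x, D x ^ 2) := by ring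
    _ ≤ Fintype.card G * (Fintype.card G * (∑ x, ‖g x‖ ^ 2) * ∑ x, ‖f x‖ ^ 2) :=
        mul_le_mul_of_nonneg_left (hG.mul_sum_norm_sum_mul_sq_le hg f) (Nat.cast_nonneg _)
    _ = (Fintype.card G * (√(∑ x, ‖g x‖ ^ 2) * √(∑ x, ‖f x‖ ^ 2))) ^ 2 := by
        rw [mul_pow, mul_pow, Real.sq_sqrt (by positivity), Real.sq_sqrt (by positivity)]
        ring

theorem sqrt_mul_expect_norm_expect_mul_sub_le (hG : IsQuasirandom G d) {f g : G → ℂ}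
    (hf : ∀ x, ‖f x‖ ≤ 1) (hg : ∀ x, ‖g x‖ ≤ 1) :
    √d * 𝔼 x, ‖𝔼 y, f y * g (x * y) - (𝔼 y, f y) * 𝔼 y, g y‖ ≤ 1 := by
  set N : ℝ := (Fintype.card G : ℝ) with hN
  have hNpos : 0 < N := by simp [hN, Fintype.card_pos]
  let g₀ (x : G) : ℂ := g x - 𝔼 y, g y
  have hg₀ : ∑ x, g₀ x = 0 := by
    simp [g₀, Finset.sum_sub_distrib, Fintype.card_mul_expect]
  have hl2 {u : G → ℂ} (hu : ∀ x, ‖u x‖ ≤ 1) : ∑ x, ‖u x‖ ^ 2 ≤ N :=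
    (sum_le_card_nsmul univ _ 1 fun x _ ↦ pow_le_one₀ (norm_nonneg _) (hu x)).trans_eq
      (by simp [hN])
  have hcentre (x : G) : ‖𝔼 y, f y * g (x * y) - (𝔼 y, f y) * 𝔼 y, g y‖ =
      ‖∑ y, g₀ (x * y) * f y‖ / N := by
    rw [expect_mul, ← expect_sub_distrib, Fintype.expect_eq_sum_div_card, norm_div]
    simp [g₀, hN, mul_comm, mul_sub]
  calc √d * 𝔼 x, ‖𝔼 y, f y * g (x * y) - (𝔼 y, f y) * 𝔼 y, g y‖
      = (√d * ∑ x, ‖∑ y, g₀ (x * y) * f y‖) / (N * N) := by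
        rw [expect_congr rfl fun x _ ↦ hcentre x, Fintype.expect_eq_sum_div_card, ← sum_div,
          ← hN, div_div, mul_div_assoc']
    _ ≤ (N * (√N * √N)) / (N * N) := by
        refine div_le_div_of_nonneg_right
          ((hG.sqrt_mul_sum_norm_sum_mul_le hg₀ f).trans ?_) (by positivity)
        gcongr
        exacts [(sum_norm_sub_expect_sq_le g).trans (hl2 hg), hl2 hf]
    _ = 1 := by rw [Real.mul_self_sqrt hNpos.le, div_self (by positivity)]

end IsQuasirandom

section Combinatorics

theorem powerset_map_eq_map_mapEmbedding {α β : Type*} (e : α ↪ β) (s : Finset α) :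
    (s.map e).powerset = s.powerset.map (mapEmbedding e).toEmbedding := by
  ext t
  simp only [mem_powerset, subset_map_iff, mem_map, RelEmbedding.coe_toEmbedding,
    mapEmbedding_apply, eq_comm]

theorem prod_finset_fin_succ {M : Type*} [CommMonoid M] {n : ℕ} (φ : Finset (Fin (n + 1)) → M) :
    ∏ E, φ E = ∏ F : Finset (Fin n),
      (φ (F.map (Fin.succEmb n)) * φ (insert 0 (F.map (Fin.succEmb n)))) := by
  rw [← powerset_univ, Fin.univ_succ, cons_eq_insert, prod_powerset_insert (by simp),
    powerset_map_eq_map_mapEmbedding, prod_map, prod_map, powerset_univ, ← prod_mul_distrib]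
  rfl

theorem prod_nonempty_finset_fin_succ {M : Type*} [CommMonoid M] {n : ℕ}
    (φ : Finset (Fin (n + 1)) → M) :
    ∏ E with E.Nonempty, φ E = φ {0} * ∏ F : Finset (Fin n) with F.Nonempty,
      (φ (F.map (Fin.succEmb n)) * φ (insert 0 (F.map (Fin.succEmb n)))) := by
  have hne : ({F | F.Nonempty} : Finset (Finset (Fin n))) = univ.erase ∅ := by
    ext; simp [nonempty_iff_ne_empty]
  rw [prod_filter, prod_finset_fin_succ, ← mul_prod_erase _ _ (mem_univ ∅), hne]
  congr 1
  · simp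
  · refine prod_congr rfl fun F hF ↦ ?_
    have := nonempty_iff_ne_empty.mpr (ne_of_mem_erase hF)
    simp [this]

theorem card_nonempty_finset_fin (n : ℕ) :
    #{F : Finset (Fin n) | F.Nonempty} = 2 ^ n - 1 := by
  simp only [nonempty_iff_ne_empty, filter_ne', mem_univ, card_erase_of_mem, card_univ,
    Fintype.card_finset, Fintype.card_fin]

theorem prod_nonempty_div_pow_eq_prod_div_mul_pow {K : Type*} [Field K] {n : ℕ} {N : K}
    (hN : N ≠ 0) (b : Finset (Fin n) → K) :
    (∏ F with F.Nonempty, b F) / N ^ (2 ^ n - 1 - n) =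
      (∏ F with F.Nonempty, b F / N) * N ^ n := by
  have hcard : 2 ^ n - 1 = 2 ^ n - 1 - n + n := by
    have := Nat.lt_two_pow_self (n := n)
    lia
  rw [prod_div_distrib, prod_const, card_nonempty_finset_fin, hcard, pow_add]
  simp only [Nat.add_sub_cancel]
  field_simp

section prodF

variable {M : Type*} [Monoid M] {n : ℕ} (x : M) (a : Fin n → M) (F : Finset (Fin n))

theorem prodF_cons_map_succEmb : prodF (Fin.cons x a) (F.map (Fin.succEmb n)) = prodF a F := by
  rw [prodF, ← map_sort (r := (· ≤ ·)) (r' := (· ≤ ·)) (Fin.succEmb n) F (by simp), List.map_map]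
  rfl

theorem prodF_cons_insert_zero :
    prodF (Fin.cons x a) (insert 0 (F.map (Fin.succEmb n))) = x * prodF a F := by
  rw [← prodF_cons_map_succEmb x a F, prodF, sort_insert _ (fun i _ ↦ Fin.zero_le i) (by simp),
    List.map_cons, List.prod_cons]
  rfl

theorem prodF_singleton (i : Fin n) : prodF a {i} = a i := by simp [prodF]

end prodF

theorem expect_fin_succ {α M : Type*} [Fintype α] [AddCommMonoid M] [Module ℚ≥0 M] {n : ℕ}
    (φ : (Fin (n + 1) → α) → M) : 𝔼 a, φ a = 𝔼 x, 𝔼 a, φ (Fin.cons x a) := by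
  rw [← expect_product', univ_product_univ]
  exact (Fintype.expect_equiv (Fin.consEquiv fun _ ↦ α) _ _ fun _ ↦ rfl).symm

theorem expect_prod_prodF_fin_succ {G R : Type*} [Monoid G] [Fintype G] [CommSemiring R]
    [Algebra ℚ≥0 R] {n : ℕ} (f : Finset (Fin (n + 1)) → G → R) :
    𝔼 a : Fin (n + 1) → G, ∏ E with E.Nonempty, f E (prodF a E) =
      𝔼 x, f {0} x * 𝔼 a : Fin n → G, ∏ F with F.Nonempty,
        (f (F.map (Fin.succEmb n)) (prodF a F) *
          f (insert 0 (F.map (Fin.succEmb n))) (x * prodF a F)) := by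
  simp only [expect_fin_succ, prod_nonempty_finset_fin_succ, prodF_singleton, Fin.cons_zero,
    prodF_cons_map_succEmb, prodF_cons_insert_zero, ← mul_expect]

end Combinatorics

namespace IsQuasirandom

variable {G : Type*} [Group G] [Fintype G] {d : ℕ}

theorem sqrt_mul_expect_norm_prod_expect_sub_le (hG : IsQuasirandom G d) {ι : Type*}
    {s : Finset ι} {f g : ι → G → ℂ} (hf : ∀ i ∈ s, ∀ x, ‖f i x‖ ≤ 1)
    (hg : ∀ i ∈ s, ∀ x, ‖g i x‖ ≤ 1) :
    √d * 𝔼 x, ‖∏ i ∈ s, 𝔼 y, f i y * g i (x * y) - ∏ i ∈ s, (𝔼 y, f i y) * 𝔼 y, g i y‖ ≤ #s := by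
  have hcorr (x) : ∀ i ∈ s, ‖𝔼 y, f i y * g i (x * y)‖ ≤ 1 := fun i hi ↦
    norm_expect_le_of_norm_le fun y ↦
      (norm_mul_le _ _).trans (mul_le_one₀ (hf i hi y) (norm_nonneg _) (hg i hi _))
  have hmean : ∀ i ∈ s, ‖(𝔼 y, f i y) * 𝔼 y, g i y‖ ≤ 1 := fun i hi ↦
    (norm_mul_le _ _).trans (mul_le_one₀ (norm_expect_le_of_norm_le (hf i hi)) (norm_nonneg _)
      (norm_expect_le_of_norm_le (hg i hi)))
  calc √d * 𝔼 x, ‖∏ i ∈ s, 𝔼 y, f i y * g i (x * y) - ∏ i ∈ s, (𝔼 y, f i y) * 𝔼 y, g i y‖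
      ≤ √d * 𝔼 x, ∑ i ∈ s, ‖𝔼 y, f i y * g i (x * y) - (𝔼 y, f i y) * 𝔼 y, g i y‖ := by
        gcongr with x
        exact norm_prod_sub_prod_le_sum_norm_sub (hcorr x) hmean
    _ = ∑ i ∈ s, √d * 𝔼 x, ‖𝔼 y, f i y * g i (x * y) - (𝔼 y, f i y) * 𝔼 y, g i y‖ := by
        rw [expect_sum_comm, mul_sum]
    _ ≤ ∑ i ∈ s, 1 :=
        sum_le_sum fun i hi ↦ hG.sqrt_mul_expect_norm_expect_mul_sub_le (hf i hi) (hg i hi)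
    _ = #s := by simp

theorem sqrt_mul_norm_expect_prod_prodF_sub_le (hG : IsQuasirandom G d) {n : ℕ}
    {f : Finset (Fin n) → G → ℂ} (hf : ∀ F x, ‖f F x‖ ≤ 1) :
    √d * ‖𝔼 a : Fin n → G, ∏ F with F.Nonempty, f F (prodF a F) -
      ∏ F with F.Nonempty, 𝔼 x, f F x‖ ≤ 2 ^ n - 1 - n := by
  induction n with
  | zero => simp [Finset.filter_false_of_mem, nonempty_iff_ne_empty, Subsingleton.elim _ ∅]
  | succ n ih =>
    let f₀ (F : Finset (Fin n)) := f (F.map (Fin.succEmb n))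
    let f₁ (F : Finset (Fin n)) := f (insert 0 (F.map (Fin.succEmb n)))
    let P (x : G) : ℂ := 𝔼 a : Fin n → G,
      ∏ F with F.Nonempty, (f₀ F (prodF a F) * f₁ F (x * prodF a F))
    let Q (x : G) : ℂ := ∏ F with F.Nonempty, 𝔼 y, f₀ F y * f₁ F (x * y)
    let c : ℂ := ∏ F with F.Nonempty, (𝔼 y, f₀ F y) * 𝔼 y, f₁ F y
    have hPQ (x : G) : √d * ‖P x - Q x‖ ≤ 2 ^ n - 1 - n :=
      ih (f := fun F y ↦ f₀ F y * f₁ F (x * y)) fun F y ↦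
        (norm_mul_le _ _).trans (mul_le_one₀ (hf _ y) (norm_nonneg _) (hf _ _))
    have hQc : √d * 𝔼 x, ‖Q x - c‖ ≤ 2 ^ n - 1 := by
      refine (hG.sqrt_mul_expect_norm_prod_expect_sub_le (fun F _ ↦ hf _)
        fun F _ ↦ hf _).trans_eq ?_
      rw [card_nonempty_finset_fin, Nat.cast_sub Nat.one_le_two_pow]
      norm_num
    rw [expect_prod_prodF_fin_succ, prod_nonempty_finset_fin_succ, expect_mul, ← expect_sub_distrib]
    calc √d * ‖𝔼 x, (f {0} x * P x - f {0} x * c)‖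
        ≤ √d * 𝔼 x, (‖P x - Q x‖ + ‖Q x - c‖) := by
          gcongr
          refine (RCLike.norm_expect_le (K := ℂ)).trans (expect_le_expect fun x _ ↦ ?_)
          rw [← mul_sub, norm_mul]
          exact (mul_le_of_le_one_left (norm_nonneg _) (hf _ x)).trans
            (norm_sub_le_norm_sub_add_norm_sub _ _ _)
      _ = 𝔼 x, √d * ‖P x - Q x‖ + √d * 𝔼 x, ‖Q x - c‖ := by
          rw [expect_add_distrib, mul_add, mul_expect]
      _ ≤ (2 ^ n - 1 - n) + (2 ^ n - 1) :=
          add_le_add (expect_le univ_nonempty fun x _ ↦ hPQ x) hQc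
      _ = 2 ^ (n + 1) - 1 - (n + 1 : ℕ) := by
          push_cast
          ring

theorem sqrt_mul_abs_card_div_sub_prod_le (hG : IsQuasirandom G d) {n : ℕ}
    (A : Finset (Fin n) → Finset G) :
    √d * |(Nat.card {a : Fin n → G // ∀ F : Finset (Fin n), F.Nonempty → prodF a F ∈ A F} : ℝ) /
      Fintype.card G ^ n - ∏ F with F.Nonempty, (#(A F) / Fintype.card G : ℝ)| ≤
      2 ^ n - 1 - n := by
  classical
  let f (F : Finset (Fin n)) (x : G) : ℂ := if x ∈ A F then 1 else 0
  have hf (F x) : ‖f F x‖ ≤ 1 := by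
    by_cases hx : x ∈ A F <;> simp [f, hx]
  have hcount : 𝔼 a : Fin n → G, ∏ F with F.Nonempty, f F (prodF a F) =
      (Nat.card {a : Fin n → G // ∀ F : Finset (Fin n), F.Nonempty → prodF a F ∈ A F} : ℂ) /
        Fintype.card G ^ n := by
    simp [f, prod_ite_zero, Fintype.expect_eq_sum_div_card, Fintype.card_subtype]
  have hdens (F) : 𝔼 x, f F x = (#(A F) / Fintype.card G : ℂ) := by
    simp [f, Fintype.expect_eq_sum_div_card]
  have h := hG.sqrt_mul_norm_expect_prod_prodF_sub_le hf
  simp only [hcount, hdens] at h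
  rw [← Real.norm_eq_abs, ← Complex.norm_real]
  simpa only [Complex.ofReal_sub, Complex.ofReal_div, Complex.ofReal_pow, Complex.ofReal_prod,
    Complex.ofReal_natCast] using h

theorem sqrt_mul_abs_card_sub_le (hG : IsQuasirandom G d) {n : ℕ} (A : Finset (Fin n) → Finset G) :
    √d * |(Nat.card {a : Fin n → G // ∀ F : Finset (Fin n), F.Nonempty → prodF a F ∈ A F} : ℝ) -
      (∏ F with F.Nonempty, (#(A F) : ℝ)) / Fintype.card G ^ (2 ^ n - 1 - n)| ≤
      (2 ^ n - 1 - n) * Fintype.card G ^ n := by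
  have hN : (0 : ℝ) < Fintype.card G := mod_cast Fintype.card_pos
  have hNn : (0 : ℝ) < Fintype.card G ^ n := pow_pos hN n
  have hscale (X p : ℝ) :
      |X / Fintype.card G ^ n - p| * Fintype.card G ^ n = |X - p * Fintype.card G ^ n| := by
    rw [← abs_of_pos hNn, ← abs_mul, abs_of_pos hNn, sub_mul, div_mul_cancel₀ _ hNn.ne']
  have h := mul_le_mul_of_nonneg_right (hG.sqrt_mul_abs_card_div_sub_prod_le A) hNn.le
  rwa [mul_assoc, hscale, ← prod_nonempty_div_pow_eq_prod_div_mul_pow hN.ne'] at h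

end IsQuasirandom

theorem stmt_0_general (n : ℕ) (δ : Finset (Fin n) → ℝ)
    (hδ : ∀ F : Finset (Fin n), F.Nonempty → 0 < δ F) (η : ℝ) (hη : 0 < η) :
    ∃ d : ℕ, 0 < d ∧ ∀ (G : Type*) [Group G] [Fintype G], IsQuasirandom G d →
      ∀ A : Finset (Fin n) → Finset G,
        (∀ F : Finset (Fin n), F.Nonempty → δ F * Fintype.card G ≤ #(A F)) →
        |(Nat.card {a : Fin n → G // ∀ F : Finset (Fin n), F.Nonempty → prodF a F ∈ A F} : ℝ) -
          (∏ F with F.Nonempty, (#(A F) : ℝ)) / Fintype.card G ^ (2 ^ n - 1 - n)| ≤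
          η * ((∏ F with F.Nonempty, (#(A F) : ℝ)) / Fintype.card G ^ (2 ^ n - 1 - n)) := by
  set Δ : ℝ := ∏ F with F.Nonempty, δ F
  have hΔ : 0 < Δ := prod_pos fun F hF ↦ hδ F (mem_filter.mp hF).2
  obtain ⟨d, hd⟩ := exists_nat_gt (((2 ^ n - 1 - n) / (η * Δ)) ^ 2)
  have hd₀ : (0 : ℝ) < d := (sq_nonneg _).trans_lt hd
  refine ⟨d, Nat.cast_pos.mp hd₀, fun G _ _ hG A hA ↦ ?_⟩
  have hd_large : 2 ^ n - 1 - n ≤ √d * (η * Δ) :=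
    (div_le_iff₀ (by positivity)).mp (Real.le_sqrt_of_sq_le hd.le)
  have hN : (0 : ℝ) < Fintype.card G := mod_cast Fintype.card_pos
  have hmain : Δ * Fintype.card G ^ n ≤
      (∏ F with F.Nonempty, (#(A F) : ℝ)) / Fintype.card G ^ (2 ^ n - 1 - n) := by
    rw [prod_nonempty_div_pow_eq_prod_div_mul_pow hN.ne']
    refine mul_le_mul_of_nonneg_right (prod_le_prod (fun F hF ↦ ?_) fun F hF ↦ ?_) (by positivity)
    · exact (hδ F (mem_filter.mp hF).2).le
    · exact (le_div_iff₀ hN).mpr (hA F (mem_filter.mp hF).2)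
  refine le_of_mul_le_mul_left ?_ (Real.sqrt_pos.mpr hd₀)
  calc _ ≤ (2 ^ n - 1 - n) * (Fintype.card G : ℝ) ^ n := hG.sqrt_mul_abs_card_sub_le A
    _ ≤ √d * (η * Δ) * Fintype.card G ^ n := by gcongr
    _ = √d * (η * (Δ * Fintype.card G ^ n)) := by ring
    _ ≤ _ := by gcongr

theorem stmt_0 (n : ℕ) (hn : 2 ≤ n) (δ : Finset (Fin n) → ℝ)
    (hδ : ∀ F : Finset (Fin n), F.Nonempty → 0 < δ F)
    (η : ℝ) (hη : 0 < η) :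
    ∃ d : ℕ, 0 < d ∧
      ∀ (G : Type) [Group G] [Fintype G], IsQuasirandom G d →
        ∀ A : Finset (Fin n) → Finset G,
          (∀ F : Finset (Fin n), F.Nonempty → δ F * Fintype.card G ≤ (A F).card) →
          (1 - η) * (∏ F ∈ Finset.univ.filter (fun F : Finset (Fin n) => F.Nonempty),
              ((A F).card : ℝ)) / (Fintype.card G : ℝ) ^ (2 ^ n - 1 - n) ≤
            (Nat.card {a : Fin n → G //
              ∀ F : Finset (Fin n), F.Nonempty → prodF a F ∈ A F} : ℝ) := by
  obtain ⟨d, hd, hcount⟩ := stmt_0_general n δ hδ η hη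
  refine ⟨d, hd, fun G _ _ hG A hA ↦ ?_⟩
  rw [mul_div_assoc]
  linarith [(abs_sub_le_iff.mp (hcount G hG A hA)).2]
end

section
/- For every real number K ≥ 1 there exists η = η(K) > 0 with the following property: for every abelian group G (written additively) and every finite nonempty subset A of G with |A + A| ≤ K·|A| and such that A contains no element of order 2, the number of pairs (a, b) ∈ G × G with a ∈ A, a + b ∈ A and a + 2b ∈ A is at least η·|A|². -/
open Pointwise

/-!
Join `x ∈ A + B`, `y ∈ A + B + B` and `z ∈ B` pairwise whenever they extend to a triple
`(a + b, a + b + b, b)` with `a ∈ A` and `b ∈ B`. A triangle `(x, y, z)` of this graph makes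
`y - 2z, x - z, 2x - y` a progression in `A`, and it is determined by the progression and `z`.
The triples `(a + b, a + b + b, b)` are `|A| |B|` edge-disjoint triangles, so the triangle removal
lemma yields a positive proportion of all triples as triangles once `A + B + B` is not much larger
than `A` and `B`. For `B = A` this is ensured by small doubling, through the Plünnecke–Ruzsa
inequality.
-/

open Finset SimpleGraph TripartiteFromTriangles

section TriangleCounting

variable {α β γ : Type*} [Fintype α] [Fintype β] [Fintype γ]
  [DecidableEq α] [DecidableEq β] [DecidableEq γ]

/-- The index triples of all triangles of `graph t`, explicit or accidental: the triples each two
of whose entries occur together in a triple of `t`. -/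
def graphTriangles (t : Finset (α × β × γ)) : Finset (α × β × γ) :=
  {x | (∃ c, (x.1, x.2.1, c) ∈ t) ∧ (∃ b, (x.1, b, x.2.2) ∈ t) ∧ ∃ a, (a, x.2.1, x.2.2) ∈ t}

lemma mem_graphTriangles {t : Finset (α × β × γ)} {a : α} {b : β} {c : γ} :
    (a, b, c) ∈ graphTriangles t ↔
      (∃ c', (a, b, c') ∈ t) ∧ (∃ b', (a, b', c) ∈ t) ∧ ∃ a', (a', b, c) ∈ t := by
  simp only [graphTriangles, mem_filter_univ]

lemma cliqueFinset_graph_eq_map (t : Finset (α × β × γ)) :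
    (graph t).cliqueFinset 3 = (graphTriangles t).map toTriangle := by
  ext s
  simp only [mem_cliqueFinset_iff, mem_map, Prod.exists, mem_graphTriangles]
  constructor
  · intro hs
    obtain ⟨x, y, z, hxy, hxz, hyz, rfl⟩ := is3Clique_iff.1 hs
    obtain ⟨a, b, c, habc, hab, hac, hbc⟩ := graph_triple hxy hxz hyz
    exact ⟨a, b, c, ⟨Graph.in₀₁_iff.1 hab, Graph.in₀₂_iff.1 hac, Graph.in₁₂_iff.1 hbc⟩, habc⟩
  · rintro ⟨a, b, c, ⟨hab, hac, hbc⟩, rfl⟩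
    exact is3Clique_triple_iff.2
      ⟨Graph.in₀₁_iff.2 hab, Graph.in₀₂_iff.2 hac, Graph.in₁₂_iff.2 hbc⟩

lemma triangleRemovalBound_mul_le_card_graphTriangles (t : Finset (α × β × γ)) [ExplicitDisjoint t]
    {ε : ℝ}
    (ht : ε * ((Fintype.card α + Fintype.card β + Fintype.card γ) ^ 2 : ℕ) ≤ #t) :
    triangleRemovalBound ε * (Fintype.card α + Fintype.card β + Fintype.card γ : ℕ) ^ 3 ≤
      #(graphTriangles t) := by
  simpa only [cliqueFinset_graph_eq_map, card_map, Fintype.card_sum, ← add_assoc] using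
    (farFromTriangleFree t ht).le_card_cliqueFinset

end TriangleCounting

section ThreeTermProgressions

variable {G : Type*} [AddCommGroup G] [DecidableEq G]

/-- The three-term arithmetic progressions in `A`, degenerate ones included, encoded as pairs
`(a, b)` of a first term and a common difference. -/
def threeAPs (A : Finset G) : Finset (G × G) :=
  {p ∈ A ×ˢ (A - A) | p.1 + p.2 ∈ A ∧ p.1 + 2 • p.2 ∈ A}

lemma mem_threeAPs {A : Finset G} {p : G × G} :
    p ∈ threeAPs A ↔ p.1 ∈ A ∧ p.1 + p.2 ∈ A ∧ p.1 + 2 • p.2 ∈ A := by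
  have diff_mem (h₀ : p.1 ∈ A) (h₁ : p.1 + p.2 ∈ A) : p.2 ∈ A - A := by
    simpa only [add_sub_cancel_left] using sub_mem_sub h₁ h₀
  simp only [threeAPs, mem_filter, mem_product]
  tauto

/-- The triples `(a + b, a + b + b, b)` with `a ∈ A` and `b ∈ B`, viewed in the product of the
finite types in which their entries lie. They index the explicit triangles of the graph to which
the triangle removal lemma is applied. -/
def sumTriples (A B : Finset G) :
    Finset ((A + B : Finset G) × (A + B + B : Finset G) × B) :=
  univ.map ⟨fun p : A × B ↦
    (⟨p.1 + p.2, add_mem_add p.1.2 p.2.2⟩,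
      ⟨p.1 + p.2 + p.2, add_mem_add (add_mem_add p.1.2 p.2.2) p.2.2⟩, p.2), by
    rintro ⟨a, b⟩ ⟨a', b'⟩ h
    simp only [Prod.mk.injEq, Subtype.mk.injEq] at h
    obtain ⟨hsum, -, rfl⟩ := h
    rw [Subtype.ext (add_right_cancel hsum)]⟩

lemma card_sumTriples (A B : Finset G) : #(sumTriples A B) = #A * #B := by
  simp only [sumTriples, card_map, card_univ, Fintype.card_prod, Fintype.card_coe]

variable {A B : Finset G} {x : (A + B : Finset G)} {y : (A + B + B : Finset G)} {z : B}

lemma mem_sumTriples : (x, y, z) ∈ sumTriples A B ↔ (x - z : G) ∈ A ∧ (y : G) = x + z := by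
  constructor
  · intro h
    obtain ⟨⟨a, b⟩, -, ⟨⟩⟩ := mem_map.1 h
    exact ⟨by simpa only [add_sub_cancel_right] using a.2, rfl⟩
  · rintro ⟨hxz, hy⟩
    have sum_eq : (x - z + z : G) = x := sub_add_cancel _ _
    have sum_add_eq : (x - z + z + z : G) = y := by rw [sum_eq, hy]
    exact mem_map.2 ⟨(⟨x - z, hxz⟩, z), mem_univ _,
      Prod.ext (Subtype.ext sum_eq) (Prod.ext (Subtype.ext sum_add_eq) rfl)⟩

instance sumTriples_explicitDisjoint (A B : Finset G) : ExplicitDisjoint (sumTriples A B) where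
  inj₀ _ _ _ _ h h' := Subtype.ext <|
    add_right_cancel ((mem_sumTriples.1 h).2.symm.trans (mem_sumTriples.1 h').2)
  inj₁ _ _ _ _ h h' := Subtype.ext <|
    (mem_sumTriples.1 h).2.trans (mem_sumTriples.1 h').2.symm
  inj₂ _ _ _ _ h h' := Subtype.ext <|
    add_left_cancel ((mem_sumTriples.1 h).2.symm.trans (mem_sumTriples.1 h').2)

lemma mem_threeAPs_of_mem_graphTriangles (h : (x, y, z) ∈ graphTriangles (sumTriples A B)) :
    ((y - 2 • z : G), (x + z - y : G)) ∈ threeAPs A := by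
  simp only [mem_graphTriangles, mem_sumTriples] at h
  obtain ⟨⟨z', hxz', hy⟩, ⟨y', hxz, -⟩, x', hxz'', hy'⟩ := h
  have first : (y - 2 • z : G) = x' - z := by rw [hy']; abel
  have second : (y - 2 • z + (x + z - y) : G) = x - z := by abel
  have third : (y - 2 • z + 2 • (x + z - y) : G) = x - z' := by rw [hy]; abel
  simp only [mem_threeAPs, second, third]
  exact ⟨first ▸ hxz'', hxz, hxz'⟩

lemma card_graphTriangles_sumTriples_le (A B : Finset G) :
    #(graphTriangles (sumTriples A B)) ≤ #(threeAPs A) * #B := by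
  rw [← card_product]
  refine card_le_card_of_injOn
    (fun t ↦ ((t.2.1 - 2 • t.2.2, t.1 + t.2.2 - t.2.1), t.2.2)) ?_ ?_
  · rintro ⟨x, y, z⟩ h
    exact mem_product.2 ⟨mem_threeAPs_of_mem_graphTriangles h, z.2⟩
  · rintro ⟨x, y, z⟩ - ⟨x', y', z'⟩ - h
    simp only [Prod.mk.injEq] at h
    obtain ⟨⟨hfirst, hdiff⟩, hz⟩ := h
    obtain rfl := Subtype.ext hz
    obtain rfl := Subtype.ext (sub_left_injective hfirst)
    obtain rfl := Subtype.ext (add_right_cancel (sub_left_injective hdiff))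
    rfl

theorem triangleRemovalBound_mul_le_card_threeAPs_mul (A B : Finset G) {ε : ℝ}
    (h : ε * ((#(A + B) + #(A + B + B) + #B) ^ 2 : ℕ) ≤ #A * #B) :
    triangleRemovalBound ε * (#(A + B) + #(A + B + B) + #B : ℕ) ^ 3 ≤ #(threeAPs A) * #B := by
  have removal := triangleRemovalBound_mul_le_card_graphTriangles (sumTriples A B) (ε := ε)
  simp only [Fintype.card_coe, card_sumTriples, Nat.cast_mul] at removal
  exact (removal h).trans (mod_cast card_graphTriangles_sumTriples_le A B)

lemma card_nsmul_le_of_card_add_le {K : ℝ} (hA : A.Nonempty) (h : #(A + B) ≤ K * #A) (n : ℕ) :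
    #(n • B) ≤ K ^ n * #A := by
  have hpos : (0 : ℝ) < #A := mod_cast hA.card_pos
  calc (#(n • B) : ℝ)
      ≤ (#(A + B) / #A) ^ n * #A := by
        simpa using (NNRat.cast_le (K := ℝ)).2 (pluennecke_ruzsa_inequality_nsmul_add hA B n)
    _ ≤ K ^ n * #A := by gcongr; rwa [div_le_iff₀ hpos]

theorem triangleRemovalBound_mul_card_sq_le_card_threeAPs {K : ℝ} (hK : 0 < K)
    (h : #(A + A) ≤ K * #A) :
    triangleRemovalBound (1 / (9 * K ^ 6)) * #A ^ 2 ≤ #(threeAPs A) := by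
  obtain rfl | hA := A.eq_empty_or_nonempty
  · simp
  have hpos : (0 : ℝ) < #A := mod_cast hA.card_pos
  have tripling : #(A + A + A) ≤ K ^ 3 * #A := by
    simpa only [succ_nsmul, zero_nsmul, zero_add] using card_nsmul_le_of_card_add_le hA h 3
  set N := #(A + A) + #(A + A + A) + #A with hN
  have card_le_N : #A ≤ N := Nat.le_add_left ..
  have N_le : (N : ℝ) ≤ 3 * K ^ 3 * #A := by
    have h₁ : #A ≤ #(A + A) := card_le_card_add_right hA
    have h₂ : #(A + A) ≤ #(A + A + A) := card_le_card_add_right hA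
    have : (N : ℝ) ≤ 3 * #(A + A + A) := by norm_cast; lia
    linarith
  have dense : 1 / (9 * K ^ 6) * (N ^ 2 : ℕ) ≤ (#A * #A : ℝ) := by
    calc (1 / (9 * K ^ 6) * (N ^ 2 : ℕ) : ℝ) ≤ 1 / (9 * K ^ 6) * (3 * K ^ 3 * #A) ^ 2 := by
          push_cast; gcongr
      _ = #A * #A := by field
  refine le_of_mul_le_mul_right ?_ hpos
  calc triangleRemovalBound (1 / (9 * K ^ 6)) * #A ^ 2 * #A
      = triangleRemovalBound (1 / (9 * K ^ 6)) * #A ^ 3 := by ring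
    _ ≤ triangleRemovalBound (1 / (9 * K ^ 6)) * N ^ 3 := by gcongr
    _ ≤ #(threeAPs A) * #A := triangleRemovalBound_mul_le_card_threeAPs_mul A A dense

end ThreeTermProgressions

theorem stmt_3_general (K : ℝ) (hK : 0 < K) :
    ∃ η : ℝ, 0 < η ∧
      ∀ (G : Type*) [AddCommGroup G] [DecidableEq G] (A : Finset G),
        ((A + A).card : ℝ) ≤ K * A.card →
        η * (A.card : ℝ) ^ 2 ≤
          (Nat.card {p : G × G //
            p.1 ∈ A ∧ p.1 + p.2 ∈ A ∧ p.1 + 2 • p.2 ∈ A} : ℝ) := by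
  refine ⟨_, triangleRemovalBound_pos (ε := 1 / (9 * K ^ 6)) (by positivity),
    fun G _ _ A hdoubling ↦ ?_⟩
  rw [Nat.subtype_card (threeAPs A) fun _ ↦ mem_threeAPs]
  exact triangleRemovalBound_mul_card_sq_le_card_threeAPs hK hdoubling

theorem stmt_3 (K : ℝ) (hK : 1 ≤ K) :
    ∃ η : ℝ, 0 < η ∧
      ∀ (G : Type) [AddCommGroup G] [DecidableEq G] (A : Finset G),
        A.Nonempty →
        ((A + A).card : ℝ) ≤ K * A.card →
        (∀ a ∈ A, a + a = 0 → a = 0) →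
        η * (A.card : ℝ) ^ 2 ≤
          (Nat.card {p : G × G //
            p.1 ∈ A ∧ p.1 + p.2 ∈ A ∧ p.1 + 2 • p.2 ∈ A} : ℝ) := by
  obtain ⟨η, hη, hcount⟩ := stmt_3_general K (zero_lt_one.trans_le hK)
  exact ⟨η, hη, fun G _ _ A _ hdoubling _ ↦ hcount G A hdoubling⟩
end

section
/- For every real number K ≥ 1 and all positive integers k and m there exists η = η(K, k, m) > 0 with the following property: for every group G, every finite nonempty subset A of G with |A·A·A| ≤ K·|A|, and any three functions f₁, f₂, f₃ from A to the m-fold productset A^{⊙m}, each having all fibers of size at most k, such that f₁(a)·f₂(a) = f₃(a) for all a ∈ A, the number of triples (a₁, a₂, a₃) ∈ A × A × A with f₁(a₁)·f₂(a₂) = f₃(a₃) is at least η·|A|². -/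
open Pointwise

/-!
Pass to a subset `B` of `A`, of density bounded below, on which the three functions are injective.
Put `X = A` and `Y = Z = (A ∪ A⁻¹ ∪ {1}) ^ (m + 3)`, and consider the triples
`(x, x * f₁ b, x * f₃ b)` with `x ∈ X` and `b ∈ B`. Injectivity makes them edge-disjoint triangles
in a tripartite graph on `X`, `Y`, `Z`, and there are `|X| * |B|` of them. Small tripling makes this
quadratic in the number of vertices, so by the triangle removal lemma the graph contains cubically
many triangles. Finally, a triangle is determined by its vertex in `X` and a triple `(a, b, c)` with
`f₁ a * f₂ b = f₃ c`.
-/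

section SmallTripling

open Finset
open List (finRange)

variable {G : Type*} [DecidableEq G]

lemma union_one_pow_subset_biUnion [Monoid G] (T : Finset G) (n : ℕ) :
    (T ∪ {1}) ^ n ⊆ (range (n + 1)).biUnion fun j ↦ T ^ j := by
  induction n with
  | zero => simp
  | succ n ih =>
    intro x hx
    rw [pow_succ, mem_mul] at hx
    obtain ⟨y, hy, z, hz, rfl⟩ := hx
    obtain ⟨j, hj, hyj⟩ := mem_biUnion.1 (ih hy)
    have hj : j < n + 1 := mem_range.1 hj
    obtain hz | hz := mem_union.1 hz
    · exact mem_biUnion.2 ⟨j + 1, mem_range.2 (by lia), pow_succ T j ▸ mul_mem_mul hyj hz⟩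
    · rw [mem_singleton.1 hz, mul_one]
      exact mem_biUnion.2 ⟨j, mem_range.2 (by lia), hyj⟩

lemma card_union_one_pow_le [CancelMonoid G] {T : Finset G} (hT : T.Nonempty) (n : ℕ) :
    #((T ∪ {1}) ^ n) ≤ (n + 1) * #(T ^ n) := by
  calc
    #((T ∪ {1}) ^ n) ≤ #((range (n + 1)).biUnion fun j ↦ T ^ j) :=
      card_le_card (union_one_pow_subset_biUnion T n)
    _ ≤ #(range (n + 1)) * #(T ^ n) := card_biUnion_le_card_mul _ _ _ fun j hj ↦
      hT.card_pow_mono (Nat.lt_succ_iff.1 (mem_range.1 hj))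
    _ = (n + 1) * #(T ^ n) := by rw [card_range]

variable [Group G] {A : Finset G} {K : ℝ} {m : ℕ}

lemma union_inv_pow_subset_biUnion (A : Finset G) (m : ℕ) :
    (A ∪ A⁻¹) ^ m ⊆
      univ.biUnion fun ε : Fin m → ℤˣ ↦ ((finRange m).map fun i ↦ A ^ (ε i : ℤ)).prod := by
  intro x hx
  obtain ⟨g, rfl⟩ := mem_pow.1 hx
  have exists_sign (i : Fin m) : ∃ u : ℤˣ, (g i : G) ∈ A ^ (u : ℤ) := by
    obtain h | h := mem_union.1 (g i).2
    · exact ⟨1, by simpa using h⟩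
    · exact ⟨-1, by simpa using h⟩
  choose ε hε using exists_sign
  refine mem_biUnion.2 ⟨ε, mem_univ _, ?_⟩
  rw [← List.ofFn_eq_map]
  exact mem_prod_list_ofFn.2 ⟨fun i ↦ ⟨g i, hε i⟩, rfl⟩

lemma card_union_inv_pow_le_of_small_tripling (hm : 3 ≤ m) (hA : #(A ^ 3) ≤ K * #A) :
    #((A ∪ A⁻¹) ^ m) ≤ 2 ^ m * (K ^ (3 * (m - 2)) * #A) := by
  calc
    (#((A ∪ A⁻¹) ^ m) : ℝ) ≤
        ∑ ε : Fin m → ℤˣ, (#((finRange m).map fun i ↦ A ^ (ε i : ℤ)).prod : ℝ) := by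
      exact_mod_cast (card_le_card (union_inv_pow_subset_biUnion A m)).trans card_biUnion_le
    _ ≤ ∑ _ε : Fin m → ℤˣ, K ^ (3 * (m - 2)) * #A := sum_le_sum fun ε _ ↦
      small_alternating_pow_of_small_tripling hm hA _ fun i ↦ Int.isUnit_iff_abs_eq.1 (ε i).isUnit
    _ = 2 ^ m * (K ^ (3 * (m - 2)) * #A) := by simp

lemma card_union_inv_union_one_pow_le_of_small_tripling (hA₀ : A.Nonempty) (hm : 3 ≤ m)
    (hA : #(A ^ 3) ≤ K * #A) :
    #((A ∪ A⁻¹ ∪ {1}) ^ m) ≤ (m + 1) * 2 ^ m * K ^ (3 * (m - 2)) * #A := by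
  calc
    (#((A ∪ A⁻¹ ∪ {1}) ^ m) : ℝ) ≤ (m + 1) * #((A ∪ A⁻¹) ^ m) := by
      exact_mod_cast card_union_one_pow_le (hA₀.mono subset_union_left) m
    _ ≤ (m + 1) * (2 ^ m * (K ^ (3 * (m - 2)) * #A)) := by
      gcongr
      exact card_union_inv_pow_le_of_small_tripling hm hA
    _ = (m + 1) * 2 ^ m * K ^ (3 * (m - 2)) * #A := by ring

end SmallTripling

section InjectiveSubset

open Finset

lemma exists_subset_injOn_of_card_fiber_le {α β : Type*} [DecidableEq β] {s : Finset α}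
    {f : α → β} {k : ℕ} (hf : ∀ b, #{a ∈ s | f a = b} ≤ k) :
    ∃ t ⊆ s, #s ≤ k * #t ∧ Set.InjOn f t := by
  obtain ⟨t, hts, hinj, himage⟩ := exists_subset_injOn_image_eq_of_surjOn (f := f)
    (s := s) (t := s.image f) (by simp [Set.SurjOn])
  refine ⟨t, hts, ?_, hinj⟩
  rw [← card_image_of_injOn hinj, himage]
  exact card_le_mul_card_image s k fun b _ ↦ hf b

lemma exists_subset_forall_injOn_of_card_fiber_le {ι α β : Type*} [DecidableEq β] {s : Finset α}
    {f : ι → α → β} {k : ℕ} (I : Finset ι) (hf : ∀ i ∈ I, ∀ b, #{a ∈ s | f i a = b} ≤ k) :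
    ∃ t ⊆ s, #s ≤ k ^ #I * #t ∧ ∀ i ∈ I, Set.InjOn (f i) t := by
  classical
  induction I using Finset.induction_on with
  | empty => exact ⟨s, subset_rfl, by simp, by simp⟩
  | insert i I hi ih =>
    obtain ⟨t, hts, hcard, hinj⟩ := ih fun j hj ↦ hf j (mem_insert_of_mem hj)
    obtain ⟨u, hut, hcard_u, hinj_u⟩ := exists_subset_injOn_of_card_fiber_le (s := t) fun b ↦
      (card_le_card (filter_subset_filter _ hts)).trans (hf i (mem_insert_self i I) b)
    refine ⟨u, hut.trans hts, ?_, forall_mem_insert _ _ _ |>.2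
      ⟨hinj_u, fun j hj ↦ (hinj j hj).mono (coe_subset.2 hut)⟩⟩
    calc
      #s ≤ k ^ #I * (k * #u) := hcard.trans (Nat.mul_le_mul_left _ hcard_u)
      _ = k ^ #(insert i I) * #u := by rw [card_insert_of_notMem hi, pow_succ, mul_assoc]

end InjectiveSubset

section TriangleCounting

open Finset SimpleGraph TripartiteFromTriangles Sum3

variable {ι G : Type*} [DecidableEq G] {s t : Finset ι} {X Y Z : Finset G} {f₁ f₂ f₃ : ι → G}

/-- The triples `(a, b, c)` of indices in `s` that solve the equation `f₁ a * f₂ b = f₃ c`. -/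
def mulSolutions [Mul G] (s : Finset ι) (f₁ f₂ f₃ : ι → G) : Finset (ι × ι × ι) :=
  {p ∈ s ×ˢ s ×ˢ s | f₁ p.1 * f₂ p.2.1 = f₃ p.2.2}

lemma mem_mulSolutions [Mul G] {a b c : ι} :
    (a, b, c) ∈ mulSolutions s f₁ f₂ f₃ ↔ a ∈ s ∧ b ∈ s ∧ c ∈ s ∧ f₁ a * f₂ b = f₃ c := by
  simp [mulSolutions, and_assoc]

lemma mulSolutions_mono [Mul G] (h : t ⊆ s) :
    mulSolutions t f₁ f₂ f₃ ⊆ mulSolutions s f₁ f₂ f₃ :=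
  filter_subset_filter _ (product_subset_product h (product_subset_product h h))

/-- The triples `(x, y, z)` in which `y`, `z` arise from `x`, `y` by right multiplication by `f₁ a`,
`f₂ a`, and `z` from `x` by right multiplication by `f₃ a`, for a common index `a`. They serve as
the edge-disjoint triangles of a tripartite graph. The three parts are subtypes because the removal
lemma needs finite vertex sets, while `G` may be infinite. -/
def translationTriangles [Mul G] (X Y Z : Finset G) (s : Finset ι) (f₁ f₂ f₃ : ι → G) :
    Finset (X × Y × Z) :=
  {p | ∃ a ∈ s, (p.1 : G) * f₁ a = p.2.1 ∧ (p.2.1 : G) * f₂ a = p.2.2 ∧ (p.1 : G) * f₃ a = p.2.2}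

lemma mem_translationTriangles [Mul G] {x : X} {y : Y} {z : Z} :
    (x, y, z) ∈ translationTriangles X Y Z s f₁ f₂ f₃ ↔
      ∃ a ∈ s, (x : G) * f₁ a = y ∧ (y : G) * f₂ a = z ∧ (x : G) * f₃ a = z := by
  simp [translationTriangles]

lemma explicitDisjoint_translationTriangles [Mul G] [IsCancelMul G] (h₁ : Set.InjOn f₁ s)
    (h₂ : Set.InjOn f₂ s) (h₃ : Set.InjOn f₃ s) :
    ExplicitDisjoint (translationTriangles X Y Z s f₁ f₂ f₃) where
  inj₀ x y z x' h h' := by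
    obtain ⟨a, ha, hxy, hyz, -⟩ := mem_translationTriangles.1 h
    obtain ⟨b, hb, hxy', hyz', -⟩ := mem_translationTriangles.1 h'
    obtain rfl : a = b := h₂ ha hb (mul_left_cancel (hyz.trans hyz'.symm))
    exact Subtype.ext (mul_right_cancel (hxy.trans hxy'.symm))
  inj₁ x y z y' h h' := by
    obtain ⟨a, ha, hxy, -, hxz⟩ := mem_translationTriangles.1 h
    obtain ⟨b, hb, hxy', -, hxz'⟩ := mem_translationTriangles.1 h'
    obtain rfl : a = b := h₃ ha hb (mul_left_cancel (hxz.trans hxz'.symm))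
    exact Subtype.ext (hxy.symm.trans hxy')
  inj₂ x y z z' h h' := by
    obtain ⟨a, ha, hxy, -, hxz⟩ := mem_translationTriangles.1 h
    obtain ⟨b, hb, hxy', -, hxz'⟩ := mem_translationTriangles.1 h'
    obtain rfl : a = b := h₁ ha hb (mul_left_cancel (hxy.trans hxy'.symm))
    exact Subtype.ext (hxz.symm.trans hxz')

variable [Semigroup G] [IsCancelMul G]

lemma card_mul_card_le_card_translationTriangles (h₁ : Set.InjOn f₁ s)
    (hY : ∀ x ∈ X, ∀ a ∈ s, x * f₁ a ∈ Y) (hZ : ∀ x ∈ X, ∀ a ∈ s, x * f₃ a ∈ Z)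
    (hf : ∀ a ∈ s, f₁ a * f₂ a = f₃ a) :
    #X * #s ≤ #(translationTriangles X Y Z s f₁ f₂ f₃) := by
  rw [← card_attach (s := X), ← card_attach (s := s), ← card_product]
  refine card_le_card_of_injOn
    (fun p ↦ (p.1, ⟨_, hY p.1 p.1.2 p.2 p.2.2⟩, ⟨_, hZ p.1 p.1.2 p.2 p.2.2⟩)) ?_ ?_
  · rintro ⟨x, a⟩ -
    exact mem_translationTriangles.2 ⟨a, a.2, rfl, by rw [mul_assoc, hf a a.2], rfl⟩
  · rintro ⟨x, a⟩ - ⟨x', a'⟩ - h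
    simp only [Prod.mk.injEq, Subtype.mk.injEq] at h
    obtain ⟨rfl, h, -⟩ := h
    exact Prod.ext rfl (Subtype.ext (h₁ a.2 a'.2 (mul_left_cancel h)))

lemma exists_mulSolution_of_isNClique {S : Finset (X ⊕ Y ⊕ Z)}
    (hS : (graph (translationTriangles X Y Z s f₁ f₂ f₃)).IsNClique 3 S) :
    ∃ x y z a b c, S = {in₀ x, in₁ y, in₂ z} ∧ (a, b, c) ∈ mulSolutions s f₁ f₂ f₃ ∧
      (x : G) * f₁ a = y ∧ (x : G) * f₃ c = z := by
  obtain ⟨u, v, w, huv, huw, hvw, rfl⟩ := SimpleGraph.is3Clique_iff.1 hS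
  obtain ⟨x, y, z, hxyz, hxy, hxz, hyz⟩ := graph_triple huv huw hvw
  simp only [Graph.in₀₁_iff, Graph.in₀₂_iff, Graph.in₁₂_iff, mem_translationTriangles]
    at hxy hxz hyz
  obtain ⟨_, a, ha, hxy, -⟩ := hxy
  obtain ⟨_, c, hc, -, -, hxz⟩ := hxz
  obtain ⟨_, b, hb, -, hyz, -⟩ := hyz
  refine ⟨x, y, z, a, b, c, hxyz.symm, mem_mulSolutions.2 ⟨ha, hb, hc, ?_⟩, hxy, hxz⟩
  exact mul_left_cancel (a := (x : G)) (by rw [← mul_assoc, hxy, hyz, hxz])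

lemma card_cliqueFinset_translationTriangles_le :
    #((graph (translationTriangles X Y Z s f₁ f₂ f₃)).cliqueFinset 3) ≤
      #X * #(mulSolutions s f₁ f₂ f₃) := by
  rw [← card_attach (s := X), ← card_product]
  refine card_le_card_of_forall_subsingleton
    (fun S p ↦ ∃ (y : Y) (z : Z), S = {in₀ p.1, in₁ y, in₂ z} ∧
      (p.1 : G) * f₁ p.2.1 = y ∧ (p.1 : G) * f₃ p.2.2.2 = z) ?_ ?_
  · intro S hS
    obtain ⟨x, y, z, a, b, c, rfl, habc, hy, hz⟩ :=
      exists_mulSolution_of_isNClique (mem_cliqueFinset_iff.1 hS)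
    exact ⟨(x, a, b, c), mem_product.2 ⟨mem_attach _ _, habc⟩, y, z, rfl, hy, hz⟩
  · rintro p - _ ⟨-, y, z, rfl, hy, hz⟩ _ ⟨-, y', z', rfl, hy', hz'⟩
    rw [Subtype.ext (hy.symm.trans hy'), Subtype.ext (hz.symm.trans hz')]

lemma triangleRemovalBound_mul_cube_le_card_mulSolutions {ε : ℝ} (h₁ : Set.InjOn f₁ s)
    (h₂ : Set.InjOn f₂ s) (h₃ : Set.InjOn f₃ s) (hY : ∀ x ∈ X, ∀ a ∈ s, x * f₁ a ∈ Y)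
    (hZ : ∀ x ∈ X, ∀ a ∈ s, x * f₃ a ∈ Z) (hf : ∀ a ∈ s, f₁ a * f₂ a = f₃ a)
    (hε : ε * (#X + #Y + #Z) ^ 2 ≤ #X * #s) :
    triangleRemovalBound ε * (#X + #Y + #Z) ^ 3 ≤ #X * #(mulSolutions s f₁ f₂ f₃) := by
  have := explicitDisjoint_translationTriangles (X := X) (Y := Y) (Z := Z) h₁ h₂ h₃
  have htriangles : (#X * #s : ℝ) ≤ #(translationTriangles X Y Z s f₁ f₂ f₃) := by
    exact_mod_cast card_mul_card_le_card_translationTriangles h₁ hY hZ hf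
  have hfar : (graph (translationTriangles X Y Z s f₁ f₂ f₃)).FarFromTriangleFree ε :=
    farFromTriangleFree _ (by simpa using hε.trans htriangles)
  calc
    triangleRemovalBound ε * (#X + #Y + #Z) ^ 3
      ≤ #((graph (translationTriangles X Y Z s f₁ f₂ f₃)).cliqueFinset 3) := by
        simpa [add_assoc] using hfar.le_card_cliqueFinset
    _ ≤ #X * #(mulSolutions s f₁ f₂ f₃) := by
        exact_mod_cast card_cliqueFinset_translationTriangles_le

lemma triangleRemovalBound_mul_sq_le_card_mulSolutions {C δ : ℝ} (hδ : 0 < δ) (hX : X.Nonempty)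
    (h₁ : Set.InjOn f₁ s) (h₂ : Set.InjOn f₂ s) (h₃ : Set.InjOn f₃ s)
    (hY : ∀ x ∈ X, ∀ a ∈ s, x * f₁ a ∈ Y) (hZ : ∀ x ∈ X, ∀ a ∈ s, x * f₃ a ∈ Z)
    (hf : ∀ a ∈ s, f₁ a * f₂ a = f₃ a) (hYC : #Y ≤ C * #X) (hZC : #Z ≤ C * #X)
    (hs : δ * #X ≤ #s) :
    triangleRemovalBound (δ / (1 + 2 * C) ^ 2) * #X ^ 2 ≤ #(mulSolutions s f₁ f₂ f₃) := by
  have hX₀ : (0 : ℝ) < #X := by exact_mod_cast hX.card_pos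
  have hC : 0 ≤ C := nonneg_of_mul_nonneg_left ((Nat.cast_nonneg _).trans hYC) hX₀
  have hε : 0 < δ / (1 + 2 * C) ^ 2 := by positivity
  refine le_of_mul_le_mul_left ?_ hX₀
  calc
    #X * (triangleRemovalBound (δ / (1 + 2 * C) ^ 2) * #X ^ 2)
      = triangleRemovalBound (δ / (1 + 2 * C) ^ 2) * (#X : ℝ) ^ 3 := by ring
    _ ≤ triangleRemovalBound (δ / (1 + 2 * C) ^ 2) * (#X + #Y + #Z) ^ 3 := by
      have := triangleRemovalBound_pos hε
      gcongr
      rw [add_assoc]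
      exact le_add_of_nonneg_right (by positivity)
    _ ≤ #X * #(mulSolutions s f₁ f₂ f₃) :=
      triangleRemovalBound_mul_cube_le_card_mulSolutions h₁ h₂ h₃ hY hZ hf <| calc
        δ / (1 + 2 * C) ^ 2 * (#X + #Y + #Z) ^ 2
          ≤ δ / (1 + 2 * C) ^ 2 * (#X + C * #X + C * #X) ^ 2 := by gcongr
        _ = #X * (δ * #X) := by field_simp; ring
        _ ≤ #X * #s := by gcongr

end TriangleCounting

section General

open Finset

universe u v

theorem stmt_5_general (K δ : ℝ) (hK : 0 < K) (hδ : 0 < δ) (k m : ℕ) (hk : 0 < k) :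
    ∃ η : ℝ, 0 < η ∧
      ∀ (G : Type u) [Group G] [DecidableEq G] (A : Finset G), A.Nonempty → #(A ^ 3) ≤ K * #A →
        ∀ (ι : Type v) (s : Finset ι), δ * #A ≤ #s →
          ∀ f₁ f₂ f₃ : ι → G,
            (∀ a ∈ s, f₁ a ∈ (A ∪ A⁻¹ ∪ {1}) ^ m) →
            (∀ a ∈ s, f₃ a ∈ (A ∪ A⁻¹ ∪ {1}) ^ m) →
            (∀ g, #{a ∈ s | f₁ a = g} ≤ k) →
            (∀ g, #{a ∈ s | f₂ a = g} ≤ k) →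
            (∀ g, #{a ∈ s | f₃ a = g} ≤ k) →
            (∀ a ∈ s, f₁ a * f₂ a = f₃ a) →
            η * #A ^ 2 ≤ #(mulSolutions s f₁ f₂ f₃) := by
  set C : ℝ := ((m + 3 : ℕ) + 1) * 2 ^ (m + 3) * K ^ (3 * (m + 1))
  refine ⟨SimpleGraph.triangleRemovalBound (δ / k ^ 3 / (1 + 2 * C) ^ 2),
    SimpleGraph.triangleRemovalBound_pos (by positivity), ?_⟩
  intro G _ _ A hA hA₃ ι s hs f₁ f₂ f₃ hf₁ hf₃ hk₁ hk₂ hk₃ hf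
  obtain ⟨t, hts, hcard, hinj⟩ := exists_subset_forall_injOn_of_card_fiber_le
    (s := s) (f := ![f₁, f₂, f₃]) (k := k) univ
    fun i _ ↦ by fin_cases i; exacts [hk₁, hk₂, hk₃]
  obtain ⟨h₁, h₂, h₃⟩ : Set.InjOn f₁ t ∧ Set.InjOn f₂ t ∧ Set.InjOn f₃ t := by
    simpa [Fin.forall_fin_succ] using hinj
  have hdense : δ / k ^ 3 * #A ≤ #t := by
    rw [div_mul_eq_mul_div, div_le_iff₀' (by positivity)]
    exact hs.trans (by exact_mod_cast hcard)
  have mul_mem {g : G} (hg : g ∈ (A ∪ A⁻¹ ∪ {1}) ^ m) (x : G) (hx : x ∈ A) :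
      x * g ∈ (A ∪ A⁻¹ ∪ {1}) ^ (m + 3) := by
    have hx : x ∈ A ∪ A⁻¹ ∪ {1} := mem_union_left _ (mem_union_left _ hx)
    have hxg : x * g ∈ (A ∪ A⁻¹ ∪ {1}) ^ (m + 1) := pow_succ' (A ∪ A⁻¹ ∪ {1}) m ▸ mul_mem_mul hx hg
    exact pow_subset_pow_right (by simp) (by lia) hxg
  have hC := card_union_inv_union_one_pow_le_of_small_tripling (m := m + 3) hA (by lia) hA₃
  calc
    SimpleGraph.triangleRemovalBound (δ / k ^ 3 / (1 + 2 * C) ^ 2) * (#A : ℝ) ^ 2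
      ≤ #(mulSolutions t f₁ f₂ f₃) :=
      triangleRemovalBound_mul_sq_le_card_mulSolutions (by positivity) hA h₁ h₂ h₃
        (fun x hx a ha ↦ mul_mem (hf₁ a (hts ha)) x hx)
        (fun x hx a ha ↦ mul_mem (hf₃ a (hts ha)) x hx) (fun a ha ↦ hf a (hts ha)) hC hC hdense
    _ ≤ #(mulSolutions s f₁ f₂ f₃) := by exact_mod_cast card_le_card (mulSolutions_mono hts)

end General

theorem stmt_5 (K : ℝ) (hK : 1 ≤ K) (k m : ℕ) (hk : 0 < k) (hm : 0 < m) :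
    ∃ η : ℝ, 0 < η ∧
      ∀ (G : Type) [Group G] [DecidableEq G] (A : Finset G),
        A.Nonempty →
        ((A * A * A).card : ℝ) ≤ K * A.card →
        ∀ f₁ f₂ f₃ : G → G,
          (∀ a ∈ A, f₁ a ∈ (A ∪ A⁻¹ ∪ {1}) ^ m) →
          (∀ a ∈ A, f₂ a ∈ (A ∪ A⁻¹ ∪ {1}) ^ m) →
          (∀ a ∈ A, f₃ a ∈ (A ∪ A⁻¹ ∪ {1}) ^ m) →
          (∀ g : G, (A.filter (fun a => f₁ a = g)).card ≤ k) →
          (∀ g : G, (A.filter (fun a => f₂ a = g)).card ≤ k) →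
          (∀ g : G, (A.filter (fun a => f₃ a = g)).card ≤ k) →
          (∀ a ∈ A, f₁ a * f₂ a = f₃ a) →
          η * (A.card : ℝ) ^ 2 ≤
            (Nat.card {p : G × G × G //
              p.1 ∈ A ∧ p.2.1 ∈ A ∧ p.2.2 ∈ A ∧ f₁ p.1 * f₂ p.2.1 = f₃ p.2.2} : ℝ) := by
  obtain ⟨η, hη, h⟩ := stmt_5_general K 1 (one_pos.trans_le hK) one_pos k m hk
  refine ⟨η, hη, fun G _ _ A hA hA₃ f₁ f₂ f₃ hf₁ _ hf₃ hk₁ hk₂ hk₃ hf ↦ ?_⟩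
  rw [Nat.subtype_card (mulSolutions A f₁ f₂ f₃) fun _ ↦ mem_mulSolutions]
  exact h G A hA (by rwa [pow_three']) G A (by simp) f₁ f₂ f₃ hf₁ hf₃ hk₁ hk₂ hk₃ hf
end

section
/- For every real number K ≥ 1 and all positive integers k, m and every ε > 0 there exists η > 0 with the following property: for every group G, every finite nonempty subset A of G with |A·A·A| ≤ K·|A|, and any three functions f₁, f₂, f₃ from A to the m-fold productset A^{⊙m}, each having all fibers of size at most k, such that |{a ∈ A : f₁(a)·f₂(a) = f₃(a)}| ≥ ε·|A|, the number of triples (a₁, a₂, a₃) ∈ A × A × A with f₁(a₁)·f₂(a₂) = f₃(a₃) is at least η·|A|². -/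
open Pointwise

/-!
Restrict to a positive proportion `S` of the solutions of `f₁ a * f₂ a = f₃ a` on which all three
functions are injective, and join `x` to `x * f₁ a`, `y` to `y * f₂ a` and `x` to `x * f₃ a`. The
triangles `(x, x * f₁ a, x * f₃ a)` with `x ∈ A` and `a ∈ S` are edge-disjoint, since every edge
determines `a`. Small tripling confines their vertices to `O(|A|)` elements of the group, so these
`≫ |A|²` triangles cannot be destroyed by removing `o(|A|²)` edges, and the triangle removal lemma
yields `≫ |A|³` triangles. Each of them arises from a vertex `x ∈ A` and a triple `(a, b, c)` with
`f₁ a * f₂ b = f₃ c`, so there are `≫ |A|²` such triples.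
-/

section Injective

open Finset

variable {α β : Type*} [DecidableEq β] {S : Finset α} {k : ℕ}

theorem exists_subset_injOn_card_le_mul {f : α → β} (hf : ∀ b, #{a ∈ S | f a = b} ≤ k) :
    ∃ T ⊆ S, Set.InjOn f T ∧ #S ≤ k * #T := by
  obtain ⟨T, hTS, hinj, hT⟩ := exists_subset_injOn_image_eq_of_surjOn (f := f) S (S.image f)
    (by simpa using Set.surjOn_image f S)
  refine ⟨T, mod_cast hTS, hinj, ?_⟩
  rw [← card_image_of_injOn hinj, hT]
  exact card_le_mul_card_image S k fun b _ ↦ hf b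

theorem exists_subset_forall_injOn_card_le_pow_mul {κ : Type*} (J : Finset κ) (f : κ → α → β)
    (hf : ∀ j ∈ J, ∀ b, #{a ∈ S | f j a = b} ≤ k) :
    ∃ T ⊆ S, (∀ j ∈ J, Set.InjOn (f j) T) ∧ #S ≤ k ^ #J * #T := by
  induction J using Finset.cons_induction with
  | empty => exact ⟨S, Subset.rfl, by simp, by simp⟩
  | cons j J hj ih =>
    rw [forall_mem_cons] at hf
    obtain ⟨T, hTS, hT, hST⟩ := ih hf.2
    obtain ⟨U, hUT, hU, hTU⟩ := exists_subset_injOn_card_le_mul (S := T) (f := f j) fun b ↦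
      (card_le_card (filter_subset_filter _ hTS)).trans (hf.1 b)
    refine ⟨U, hUT.trans hTS, ?_, ?_⟩
    · exact (forall_mem_cons hj _).2 ⟨hU, fun i hi ↦ (hT i hi).mono (mod_cast hUT)⟩
    · calc #S ≤ k ^ #J * #T := hST
        _ ≤ k ^ #J * (k * #U) := by gcongr
        _ = k ^ #(J.cons j hj) * #U := by rw [card_cons, pow_succ, mul_assoc]

end Injective

section SmallTripling

open Finset

variable {G : Type*} [Group G] [DecidableEq G] {A : Finset G} {K : ℝ}

/-- The set `A₁ = A ∪ A⁻¹ ∪ {1}` whose powers are the productsets `A^{⊙m}`. -/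
def symmClosure (A : Finset G) : Finset G := A ∪ A⁻¹ ∪ {1}

theorem one_mem_symmClosure : 1 ∈ symmClosure A := by simp [symmClosure]

theorem subset_symmClosure : A ⊆ symmClosure A := fun a ha ↦ by simp [symmClosure, ha]

theorem card_prod_zpow_le_of_small_tripling (hA : A.Nonempty) (h : #(A ^ 3) ≤ K * #A)
    (l : List ℤ) (hl : ∀ e ∈ l, |e| = 1) :
    #(l.map (A ^ ·)).prod ≤ K ^ (3 * (l.length + 1)) * #A := by
  -- The library bound needs at least three factors.
  have hpad : #(l.map (A ^ ·)).prod ≤ #((l ++ [1, 1, 1]).map (A ^ ·)).prod := by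
    rw [List.map_append, List.prod_append]
    exact card_le_card_mul_right (by simp [hA])
  have hbound := small_alternating_pow_of_small_tripling (m := (l ++ [1, 1, 1]).length)
    (by simp) h (l ++ [1, 1, 1]).get fun i ↦ by
      have hi := List.get_mem (l ++ [1, 1, 1]) i
      rw [List.mem_append] at hi
      exact hi.elim (hl _) fun hi ↦ by simp_all
  have hmap : (List.finRange (l ++ [1, 1, 1]).length).map (fun i ↦ A ^ (l ++ [1, 1, 1]).get i) =
      (l ++ [1, 1, 1]).map (A ^ ·) := by
    conv_rhs => rw [← List.map_get_finRange (l ++ [1, 1, 1]), List.map_map]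
    rfl
  have hlen : (l ++ [1, 1, 1]).length - 2 = l.length + 1 := by simp
  rw [hmap, hlen] at hbound
  exact (Nat.cast_le.2 hpad).trans hbound

theorem prod_zpow_mul_symmClosure_pow_succ (l : List ℤ) (n : ℕ) :
    (l.map (A ^ ·)).prod * symmClosure A ^ (n + 1) =
      ((l ++ [1]).map (A ^ ·)).prod * symmClosure A ^ n ∪
        ((l ++ [-1]).map (A ^ ·)).prod * symmClosure A ^ n ∪
          (l.map (A ^ ·)).prod * symmClosure A ^ n := by
  have h : symmClosure A = A ^ (1 : ℤ) ∪ A ^ (-1 : ℤ) ∪ 1 := by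
    rw [zpow_one, zpow_neg_one]; rfl
  simp only [List.map_append, List.prod_append, List.map_singleton, List.prod_singleton]
  conv_lhs => rw [pow_succ', ← mul_assoc, h, mul_union, mul_union, mul_one, union_mul, union_mul,
    ← h]

theorem card_prod_zpow_mul_symmClosure_pow_le (hA : A.Nonempty) (hK : 1 ≤ K)
    (h : #(A ^ 3) ≤ K * #A) (n : ℕ) (l : List ℤ) (hl : ∀ e ∈ l, |e| = 1) :
    #((l.map (A ^ ·)).prod * symmClosure A ^ n) ≤ 3 ^ n * K ^ (3 * (l.length + n + 1)) * #A := by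
  induction n generalizing l with
  | zero => simpa using card_prod_zpow_le_of_small_tripling hA h l hl
  | succ n ih =>
    set b : ℝ := 3 ^ n * K ^ (3 * (l.length + (n + 1) + 1)) * #A with hb
    have hsign (e : ℤ) (he : |e| = 1) :
        #(((l ++ [e]).map (A ^ ·)).prod * symmClosure A ^ n) ≤ b := by
      simpa [hb, add_assoc, add_left_comm] using ih (l ++ [e]) (by simpa [or_imp, forall_and, he])
    have hone : #((l.map (A ^ ·)).prod * symmClosure A ^ n) ≤ b :=
      (ih l hl).trans <| by rw [hb]; gcongr; simp
    calc (#((l.map (A ^ ·)).prod * symmClosure A ^ (n + 1)) : ℝ)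
      _ ≤ #(((l ++ [1]).map (A ^ ·)).prod * symmClosure A ^ n) +
          #(((l ++ [-1]).map (A ^ ·)).prod * symmClosure A ^ n) +
            #((l.map (A ^ ·)).prod * symmClosure A ^ n) := by
        rw [prod_zpow_mul_symmClosure_pow_succ]
        exact_mod_cast (card_union_le _ _).trans (Nat.add_le_add_right (card_union_le _ _) _)
      _ ≤ b + b + b := by gcongr; exacts [hsign 1 (by simp), hsign (-1) (by simp)]
      _ = 3 ^ (n + 1) * K ^ (3 * (l.length + (n + 1) + 1)) * #A := by rw [hb]; ring

theorem card_symmClosure_pow_le (hA : A.Nonempty) (hK : 1 ≤ K) (h : #(A ^ 3) ≤ K * #A) (n : ℕ) :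
    #(symmClosure A ^ n) ≤ 3 ^ n * K ^ (3 * (n + 1)) * #A := by
  simpa using card_prod_zpow_mul_symmClosure_pow_le hA hK h n [] (by simp)

end SmallTripling

section MulTriples

open Finset

variable {ι G : Type*} [Mul G] [DecidableEq G] {S T : Finset ι} {f₁ f₂ f₃ : ι → G}

/-- The solutions in `S` of the equation `f₁ i * f₂ j = f₃ l`, as triples `(i, j, l)`. -/
def mulTriples (S : Finset ι) (f₁ f₂ f₃ : ι → G) : Finset (ι × ι × ι) :=
  {p ∈ S ×ˢ S ×ˢ S | f₁ p.1 * f₂ p.2.1 = f₃ p.2.2}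

theorem mem_mulTriples {p : ι × ι × ι} : p ∈ mulTriples S f₁ f₂ f₃ ↔
    p.1 ∈ S ∧ p.2.1 ∈ S ∧ p.2.2 ∈ S ∧ f₁ p.1 * f₂ p.2.1 = f₃ p.2.2 := by
  simp only [mulTriples, mem_filter, mem_product, and_assoc]

theorem mulTriples_subset_mulTriples (h : S ⊆ T) : mulTriples S f₁ f₂ f₃ ⊆ mulTriples T f₁ f₂ f₃ :=
  filter_subset_filter _ (product_subset_product h (product_subset_product h h))

theorem natCard_mulTriples :
    Nat.card {p : ι × ι × ι // p.1 ∈ S ∧ p.2.1 ∈ S ∧ p.2.2 ∈ S ∧ f₁ p.1 * f₂ p.2.1 = f₃ p.2.2} =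
      #(mulTriples S f₁ f₂ f₃) := by
  rw [← Nat.card_eq_finsetCard]
  exact Nat.card_congr (Equiv.subtypeEquivRight fun _ ↦ mem_mulTriples.symm)

end MulTriples

section Triangles

open Finset SimpleGraph TripartiteFromTriangles Sum3

variable {ι G : Type*} [Group G] [DecidableEq G] {X Y Z : Finset G} {S : Finset ι}
  {f₁ f₂ f₃ : ι → G}

/-- The triples `(x, y, z)` of `X × Y × Z` of the form `(x, x * f₁ i, x * f₃ i)` for some `i ∈ S`
with `f₁ i * f₂ i = f₃ i`. They are the triangles from which the tripartite graph fed to the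
triangle removal lemma is built; one equation per edge makes each edge determine `i`. -/
def translateTriangles (X Y Z : Finset G) (S : Finset ι) (f₁ f₂ f₃ : ι → G) :
    Finset (X × Y × Z) :=
  {p | ∃ i ∈ S, (p.1 * f₁ i : G) = p.2.1 ∧ (p.2.1 * f₂ i : G) = p.2.2 ∧ (p.1 * f₃ i : G) = p.2.2}

theorem mem_translateTriangles {x : X} {y : Y} {z : Z} :
    (x, y, z) ∈ translateTriangles X Y Z S f₁ f₂ f₃ ↔
      ∃ i ∈ S, (x * f₁ i : G) = y ∧ (y * f₂ i : G) = z ∧ (x * f₃ i : G) = z := by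
  simp only [translateTriangles, mem_filter, mem_univ, true_and]

theorem explicitDisjoint_translateTriangles (h₁ : Set.InjOn f₁ S) (h₂ : Set.InjOn f₂ S)
    (h₃ : Set.InjOn f₃ S) : ExplicitDisjoint (translateTriangles X Y Z S f₁ f₂ f₃) where
  inj₀ x y z x' hx hx' := by
    obtain ⟨i, hi, hxy, hyz, -⟩ := mem_translateTriangles.1 hx
    obtain ⟨j, hj, hxy', hyz', -⟩ := mem_translateTriangles.1 hx'
    obtain rfl := h₂ hi hj (mul_left_cancel (hyz.trans hyz'.symm))
    exact Subtype.ext (mul_right_cancel (hxy.trans hxy'.symm))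
  inj₁ x y z y' hy hy' := by
    obtain ⟨i, hi, hxy, -, hxz⟩ := mem_translateTriangles.1 hy
    obtain ⟨j, hj, hxy', -, hxz'⟩ := mem_translateTriangles.1 hy'
    obtain rfl := h₃ hi hj (mul_left_cancel (hxz.trans hxz'.symm))
    exact Subtype.ext (hxy.symm.trans hxy')
  inj₂ x y z z' hz hz' := by
    obtain ⟨i, hi, hxy, hyz, -⟩ := mem_translateTriangles.1 hz
    obtain ⟨j, hj, hxy', hyz', -⟩ := mem_translateTriangles.1 hz'
    obtain rfl := h₁ hi hj (mul_left_cancel (hxy.trans hxy'.symm))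
    exact Subtype.ext (hyz.symm.trans hyz')

theorem card_mul_card_le_card_translateTriangles (h₁ : Set.InjOn f₁ S)
    (hS : ∀ i ∈ S, f₁ i * f₂ i = f₃ i) (hY : ∀ x ∈ X, ∀ i ∈ S, x * f₁ i ∈ Y)
    (hZ : ∀ x ∈ X, ∀ i ∈ S, x * f₃ i ∈ Z) :
    #X * #S ≤ #(translateTriangles X Y Z S f₁ f₂ f₃) := by
  let triangle (q : X × S) : X × Y × Z :=
    (q.1, ⟨q.1 * f₁ q.2, hY _ q.1.2 _ q.2.2⟩, ⟨q.1 * f₃ q.2, hZ _ q.1.2 _ q.2.2⟩)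
  have hmem (q : X × S) : triangle q ∈ translateTriangles X Y Z S f₁ f₂ f₃ :=
    mem_translateTriangles.2 ⟨q.2, q.2.2, rfl, by rw [mul_assoc, hS _ q.2.2], rfl⟩
  have hinj : Function.Injective triangle := by
    rintro ⟨x, i⟩ ⟨x', j⟩ h
    simp only [triangle, Prod.mk.injEq, Subtype.mk.injEq] at h
    obtain ⟨rfl, h, -⟩ := h
    exact Prod.ext rfl (Subtype.ext (h₁ i.2 j.2 (mul_left_cancel h)))
  simpa using card_le_card_of_injOn triangle (s := univ) (fun q _ ↦ hmem q) hinj.injOn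

theorem exists_eq_of_mem_cliqueFinset_graph_translateTriangles {s : Finset (X ⊕ Y ⊕ Z)}
    (hs : s ∈ (graph (translateTriangles X Y Z S f₁ f₂ f₃)).cliqueFinset 3) :
    ∃ (x : X) (y : Y) (z : Z), s = {in₀ x, in₁ y, in₂ z} ∧ ∃ i ∈ S, ∃ j ∈ S, ∃ l ∈ S,
      (x * f₁ i : G) = y ∧ (y * f₂ j : G) = z ∧ (x * f₃ l : G) = z := by
  rw [mem_cliqueFinset_iff, SimpleGraph.is3Clique_iff] at hs
  obtain ⟨u, v, w, huv, huw, hvw, rfl⟩ := hs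
  obtain ⟨x, y, z, h, hxy, hxz, hyz⟩ := graph_triple huv huw hvw
  simp only [Graph.in₀₁_iff, Graph.in₀₂_iff, Graph.in₁₂_iff, mem_translateTriangles] at hxy hxz hyz
  obtain ⟨-, i, hi, hxy, -, -⟩ := hxy
  obtain ⟨-, l, hl, -, -, hxz⟩ := hxz
  obtain ⟨-, j, hj, -, hyz, -⟩ := hyz
  exact ⟨x, y, z, h.symm, i, hi, j, hj, l, hl, hxy, hyz, hxz⟩

theorem card_cliqueFinset_graph_translateTriangles_le :
    #((graph (translateTriangles X Y Z S f₁ f₂ f₃)).cliqueFinset 3) ≤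
      #X * #(mulTriples S f₁ f₂ f₃) := by
  rw [← card_product]
  refine card_le_card_of_forall_subsingleton
    (fun s q ↦ ∃ (x : X) (y : Y) (z : Z), s = {in₀ x, in₁ y, in₂ z} ∧
      (x : G) = q.1 ∧ (y : G) = q.1 * f₁ q.2.1 ∧ (z : G) = q.1 * f₃ q.2.2.2) (fun s hs ↦ ?_) ?_
  · obtain ⟨x, y, z, rfl, i, hi, j, hj, l, hl, hxy, hyz, hxz⟩ :=
      exists_eq_of_mem_cliqueFinset_graph_translateTriangles hs
    have hijl : f₁ i * f₂ j = f₃ l :=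
      mul_left_cancel (a := (x : G)) (by rw [← mul_assoc, hxy, hyz, hxz])
    exact ⟨(x, i, j, l), mem_product.2 ⟨x.2, mem_mulTriples.2 ⟨hi, hj, hl, hijl⟩⟩,
      x, y, z, rfl, rfl, hxy.symm, hxz.symm⟩
  · rintro q - s ⟨-, x, y, z, rfl, hx, hy, hz⟩ s' ⟨-, x', y', z', rfl, hx', hy', hz'⟩
    rw [Subtype.ext (hx.trans hx'.symm), Subtype.ext (hy.trans hy'.symm),
      Subtype.ext (hz.trans hz'.symm)]

theorem triangleRemovalBound_mul_cube_le_card_mul_card_mulTriples {δ : ℝ} (h₁ : Set.InjOn f₁ S)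
    (h₂ : Set.InjOn f₂ S) (h₃ : Set.InjOn f₃ S) (hS : ∀ i ∈ S, f₁ i * f₂ i = f₃ i)
    (hY : ∀ x ∈ X, ∀ i ∈ S, x * f₁ i ∈ Y) (hZ : ∀ x ∈ X, ∀ i ∈ S, x * f₃ i ∈ Z)
    (hδ : δ * (#X + #Y + #Z) ^ 2 ≤ #X * #S) :
    triangleRemovalBound δ * (#X + #Y + #Z) ^ 3 ≤ #X * #(mulTriples S f₁ f₂ f₃) := by
  have := explicitDisjoint_translateTriangles (X := X) (Y := Y) (Z := Z) h₁ h₂ h₃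
  have hfar : (graph (translateTriangles X Y Z S f₁ f₂ f₃)).FarFromTriangleFree δ := by
    apply farFromTriangleFree
    simp only [Fintype.card_coe]
    push_cast
    exact hδ.trans (mod_cast card_mul_card_le_card_translateTriangles h₁ hS hY hZ)
  calc triangleRemovalBound δ * (#X + #Y + #Z : ℝ) ^ 3
    _ = triangleRemovalBound δ * (Fintype.card (X ⊕ Y ⊕ Z) : ℝ) ^ 3 := by
      simp only [Fintype.card_sum, Fintype.card_coe, Nat.cast_add, add_assoc]
    _ ≤ #((graph (translateTriangles X Y Z S f₁ f₂ f₃)).cliqueFinset 3) := hfar.le_card_cliqueFinset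
    _ ≤ #X * #(mulTriples S f₁ f₂ f₃) := mod_cast card_cliqueFinset_graph_translateTriangles_le

theorem triangleRemovalBound_mul_sq_le_card_mulTriples {k : ℕ} {ε C : ℝ} (hk : 0 < k) (hε : 0 < ε)
    (hX : X.Nonempty) (hk₁ : ∀ g, #{i ∈ S | f₁ i = g} ≤ k) (hk₂ : ∀ g, #{i ∈ S | f₂ i = g} ≤ k)
    (hk₃ : ∀ g, #{i ∈ S | f₃ i = g} ≤ k) (hS : ∀ i ∈ S, f₁ i * f₂ i = f₃ i)
    (hY : ∀ x ∈ X, ∀ i ∈ S, x * f₁ i ∈ Y) (hZ : ∀ x ∈ X, ∀ i ∈ S, x * f₃ i ∈ Z)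
    (hC : #X + #Y + #Z ≤ C * #X) (hSX : ε * #X ≤ #S) :
    triangleRemovalBound (ε / (k ^ 3 * C ^ 2)) * #X ^ 2 ≤ #(mulTriples S f₁ f₂ f₃) := by
  have hX₀ : (0 : ℝ) < #X := mod_cast hX.card_pos
  have hC₀ : 0 < C := pos_of_mul_pos_left (lt_of_lt_of_le (by positivity) hC) hX₀.le
  obtain ⟨T, hTS, hinj, hST⟩ := exists_subset_forall_injOn_card_le_pow_mul univ ![f₁, f₂, f₃]
    (S := S) (k := k) (by simpa [Fin.forall_fin_succ] using ⟨hk₁, hk₂, hk₃⟩)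
  simp only [mem_univ, true_imp_iff, Fin.forall_fin_succ, card_univ, Fintype.card_fin] at hinj hST
  obtain ⟨h₁, h₂, h₃, -⟩ := hinj
  have hST' : (#S : ℝ) ≤ k ^ 3 * #T := mod_cast hST
  set δ := ε / (k ^ 3 * C ^ 2) with hδ
  have hδ₀ : 0 < δ := by positivity
  have hdense : δ * (#X + #Y + #Z) ^ 2 ≤ #X * #T :=
    calc δ * (#X + #Y + #Z : ℝ) ^ 2 ≤ δ * (C * #X) ^ 2 := by gcongr
      _ = #X * (ε * #X) / k ^ 3 := by rw [hδ]; field_simp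
      _ ≤ #X * (k ^ 3 * #T) / k ^ 3 := by gcongr ?_ / _; gcongr #X * ?_; exact hSX.trans hST'
      _ = #X * #T := by field_simp
  refine le_of_mul_le_mul_left ?_ hX₀
  calc (#X : ℝ) * (triangleRemovalBound δ * #X ^ 2) = triangleRemovalBound δ * #X ^ 3 := by ring
    _ ≤ triangleRemovalBound δ * (#X + #Y + #Z) ^ 3 := by
      have := triangleRemovalBound_pos hδ₀
      gcongr
      rw [add_assoc]
      exact le_add_of_nonneg_right (by positivity)
    _ ≤ #X * #(mulTriples T f₁ f₂ f₃) :=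
      triangleRemovalBound_mul_cube_le_card_mul_card_mulTriples h₁ h₂ h₃
        (fun i hi ↦ hS i (hTS hi)) (fun x hx i hi ↦ hY x hx i (hTS hi))
        (fun x hx i hi ↦ hZ x hx i (hTS hi)) hdense
    _ ≤ #X * #(mulTriples S f₁ f₂ f₃) := by gcongr; exact mulTriples_subset_mulTriples hTS

end Triangles

section General

open Finset SimpleGraph

theorem stmt_6_general.{u, v} (K : ℝ) (hK : 1 ≤ K) (k m : ℕ) (hk : 0 < k) (ε : ℝ) (hε : 0 < ε) :
    ∃ η : ℝ, 0 < η ∧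
      ∀ (G : Type u) [Group G] [DecidableEq G] (A : Finset G),
        A.Nonempty →
        (#(A ^ 3) : ℝ) ≤ K * #A →
        ∀ (ι : Type v) (I : Finset ι) (f₁ f₂ f₃ : ι → G),
          (∀ i ∈ I, f₁ i ∈ symmClosure A ^ m) →
          (∀ i ∈ I, f₂ i ∈ symmClosure A ^ m) →
          (∀ g, #{i ∈ I | f₁ i = g} ≤ k) →
          (∀ g, #{i ∈ I | f₂ i = g} ≤ k) →
          (∀ g, #{i ∈ I | f₃ i = g} ≤ k) →
          ε * #A ≤ #{i ∈ I | f₁ i * f₂ i = f₃ i} →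
          η * (#A : ℝ) ^ 2 ≤ #(mulTriples I f₁ f₂ f₃) := by
  set c : ℝ := 3 ^ (2 * m + 1) * K ^ (3 * (2 * m + 1 + 1))
  refine ⟨triangleRemovalBound (ε / (k ^ 3 * (1 + 2 * c) ^ 2)),
    triangleRemovalBound_pos (by positivity), ?_⟩
  intro G _ _ A hA hA₃ ι I f₁ f₂ f₃ hf₁ hf₂ hk₁ hk₂ hk₃ hS
  set S := {i ∈ I | f₁ i * f₂ i = f₃ i}
  have hSI : S ⊆ I := filter_subset ..
  have heq : ∀ i ∈ S, f₁ i * f₂ i = f₃ i := fun i hi ↦ (mem_filter.1 hi).2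
  have hfiber {f : ι → G} (hf : ∀ g, #{i ∈ I | f i = g} ≤ k) (g : G) : #{i ∈ S | f i = g} ≤ k :=
    (card_le_card (filter_subset_filter _ hSI)).trans (hf g)
  set P := symmClosure A ^ (2 * m + 1) with hP
  have hmul₁ : ∀ x ∈ A, ∀ i ∈ S, x * f₁ i ∈ P := fun x hx i hi ↦
    pow_subset_pow_right one_mem_symmClosure (by lia : m + 1 ≤ 2 * m + 1) <| by
      rw [pow_succ']
      exact mul_mem_mul (subset_symmClosure hx) (hf₁ i (hSI hi))
  have hmul₃ : ∀ x ∈ A, ∀ i ∈ S, x * f₃ i ∈ P := fun x hx i hi ↦ by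
    rw [hP, pow_succ', two_mul, pow_add, ← heq i hi]
    exact mul_mem_mul (subset_symmClosure hx) (mul_mem_mul (hf₁ i (hSI hi)) (hf₂ i (hSI hi)))
  have hcard : (#A + #P + #P : ℝ) ≤ (1 + 2 * c) * #A := by
    linarith [card_symmClosure_pow_le hA hK hA₃ (2 * m + 1)]
  calc _ ≤ (#(mulTriples S f₁ f₂ f₃) : ℝ) :=
        triangleRemovalBound_mul_sq_le_card_mulTriples hk hε hA (hfiber hk₁) (hfiber hk₂)
          (hfiber hk₃) heq hmul₁ hmul₃ hcard hS
    _ ≤ #(mulTriples I f₁ f₂ f₃) := mod_cast card_le_card (mulTriples_subset_mulTriples hSI)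

end General

theorem stmt_6 (K : ℝ) (hK : 1 ≤ K) (k m : ℕ) (hk : 0 < k) (hm : 0 < m)
    (ε : ℝ) (hε : 0 < ε) :
    ∃ η : ℝ, 0 < η ∧
      ∀ (G : Type) [Group G] [DecidableEq G] (A : Finset G),
        A.Nonempty →
        ((A * A * A).card : ℝ) ≤ K * A.card →
        ∀ f₁ f₂ f₃ : G → G,
          (∀ a ∈ A, f₁ a ∈ (A ∪ A⁻¹ ∪ {1}) ^ m) →
          (∀ a ∈ A, f₂ a ∈ (A ∪ A⁻¹ ∪ {1}) ^ m) →
          (∀ a ∈ A, f₃ a ∈ (A ∪ A⁻¹ ∪ {1}) ^ m) →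
          (∀ g : G, (A.filter (fun a => f₁ a = g)).card ≤ k) →
          (∀ g : G, (A.filter (fun a => f₂ a = g)).card ≤ k) →
          (∀ g : G, (A.filter (fun a => f₃ a = g)).card ≤ k) →
          ε * A.card ≤ ((A.filter (fun a => f₁ a * f₂ a = f₃ a)).card : ℝ) →
          η * (A.card : ℝ) ^ 2 ≤
            (Nat.card {p : G × G × G //
              p.1 ∈ A ∧ p.2.1 ∈ A ∧ p.2.2 ∈ A ∧ f₁ p.1 * f₂ p.2.1 = f₃ p.2.2} : ℝ) := by
  obtain ⟨η, hη, h⟩ := stmt_6_general K hK k m hk ε hε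
  refine ⟨η, hη, fun G _ _ A hA hA₃ f₁ f₂ f₃ hf₁ hf₂ _ hk₁ hk₂ hk₃ hS ↦ ?_⟩
  rw [natCard_mulTriples]
  exact h G A hA (by rwa [pow_three']) G A f₁ f₂ f₃ hf₁ hf₂ hk₁ hk₂ hk₃ hS
end

section
/- For every δ > 0 there exist η > 0 and ε > 0 such that for every finite group G and any three subsets A, B, C of G, each of size at least δ·|G|, which are in ε-regular position, the number of triples (a, b, c) ∈ A × B × C with a·b = c is strictly greater than η·|G|². -/
open Pointwise

/-- Three finite subsets `A`, `B`, `C` of a group are in `ε`-regular position if for all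
subsets `A₀ ⊆ A`, `B₀ ⊆ B`, `C₀ ⊆ C` of relative density at least `ε`, the set
`(A₀·A₀⁻¹·A₀)·(B₀·B₀⁻¹·B₀)` meets `C₀·C₀⁻¹·C₀`. -/
def RegularPosition {G : Type*} [Group G] [DecidableEq G]
    (A B C : Finset G) (ε : ℝ) : Prop :=
  ∀ A₀ ⊆ A, ∀ B₀ ⊆ B, ∀ C₀ ⊆ C,
    ε * A.card ≤ A₀.card → ε * B.card ≤ B₀.card → ε * C.card ≤ C₀.card →
    ((A₀ * A₀⁻¹ * A₀) * (B₀ * B₀⁻¹ * B₀) ∩ (C₀ * C₀⁻¹ * C₀)).Nonempty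

/-!
Write `n` for the order of `G` and `f` for the convolution `f x = #{(a, b) ∈ A × B | a * b = x}`.
The `ℓ²`-distance between right translates of `f` is a left-invariant pseudometric on `G`.
Every right translate of `f` is a subset sum of the family of right translates of the indicator of
`A`. A subset sum can be estimated within a prescribed error from a random sample of bounded size,
and the estimate only depends on which sample points lie in the subset, so `G` is covered by a
number of balls that does not depend on `n` (the argument of Croot and Sisask).

Sort the triples of `A × B × C` by the balls approximating `a * b`, `b` and `c`. If many triples had
`a * b` far from `c`, one class would contain many of them, and left invariance together with
regular position of its projections would bring its balls for `a * b` and `c` together. Hence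
`a * b` is close to `c` for most triples, and then `f (a * b)` and `f c` have nearly the same
average. The average of `f (a * b)` is the normalized multiplicative energy of `A` and `B`, which
is at least a constant times `n` by Cauchy–Schwarz, while the average of `f c` is proportional to
the number of solutions of `a * b = c`.
-/

open Finset Metric
open scoped NNReal Combinatorics.Additive

section Sampling

variable {α E : Type*} [Fintype α] [NormedAddCommGroup E] [InnerProductSpace ℝ E]

theorem card_mul_sum_norm_sq_sum_comp {u : α → E} (hu : ∑ a, u a = 0) (m : ℕ) :
    Fintype.card α * ∑ w : Fin m → α, ‖∑ i, u (w i)‖ ^ 2 =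
      m * (Fintype.card α : ℝ) ^ m * ∑ a, ‖u a‖ ^ 2 := by
  induction m with
  | zero => simp
  | succ m ih =>
    have expand (a : α) (w : Fin m → α) : ‖u a + ∑ i, u (w i)‖ ^ 2 =
        ‖u a‖ ^ 2 + 2 * inner ℝ (u a) (∑ i, u (w i)) + ‖∑ i, u (w i)‖ ^ 2 :=
      norm_add_sq_real _ _
    have cross : ∑ a, ∑ w : Fin m → α, inner ℝ (u a) (∑ i, u (w i)) = 0 := by
      rw [sum_comm]
      simp only [← sum_inner, hu, inner_zero_left, sum_const_zero]
    have split : ∑ w : Fin (m + 1) → α, ‖∑ i, u (w i)‖ ^ 2 =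
        (Fintype.card α : ℝ) ^ m * ∑ a, ‖u a‖ ^ 2 +
          Fintype.card α * ∑ w : Fin m → α, ‖∑ i, u (w i)‖ ^ 2 := by
      rw [← (Fin.consEquiv fun _ ↦ α).sum_comp, Fintype.sum_prod_type]
      simp only [Fin.consEquiv_apply, Fin.sum_univ_succ, Fin.cons_zero, Fin.cons_succ, expand,
        sum_add_distrib, sum_const, card_univ, Fintype.card_fun, Fintype.card_fin,
        nsmul_eq_mul, Nat.cast_pow, ← mul_sum]
      rw [cross, mul_zero, add_zero]
    rw [split, ih]
    push_cast
    ring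

/-- The error made when `∑ a, u a` is estimated from the sample `w`, scaled by the factor
`m * card α` so that no division occurs. -/
def samplingError {m : ℕ} (u : α → E) (w : Fin m → α) : E :=
  (Fintype.card α : ℝ) • ∑ i, u (w i) - (m : ℝ) • ∑ a, u a

theorem sum_norm_sq_samplingError_le [Nonempty α] {u : α → E} {V : ℝ}
    (hu : ∀ a, ‖u a‖ ^ 2 ≤ V) (m : ℕ) :
    ∑ w : Fin m → α, ‖samplingError u w‖ ^ 2 ≤
      (Fintype.card α : ℝ) ^ m * (m * (Fintype.card α ^ 2 * V)) := by
  set n : ℝ := (Fintype.card α : ℝ) with hn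
  have n_pos : 0 < n := by simp [hn, Fintype.card_pos]
  set s := ∑ a, u a with hs
  have sum_centered : ∑ a, (n • u a - s) = 0 := by
    rw [sum_sub_distrib, ← smul_sum, sum_const, card_univ, ← Nat.cast_smul_eq_nsmul ℝ, sub_self]
  have error_eq (w : Fin m → α) : samplingError u w = ∑ i, (n • u (w i) - s) := by
    simp [samplingError, smul_sum, sum_sub_distrib, Nat.cast_smul_eq_nsmul, hn, hs]
  have variance_eq : ∑ a, ‖n • u a - s‖ ^ 2 = n ^ 2 * ∑ a, ‖u a‖ ^ 2 - n * ‖s‖ ^ 2 := by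
    simp only [norm_sub_sq_real, norm_smul, inner_smul_left, sum_add_distrib, sum_sub_distrib,
      mul_pow, ← mul_sum, ← sum_inner, ← hs, real_inner_self_eq_norm_sq, sum_const, card_univ,
      nsmul_eq_mul, ← hn, Real.norm_eq_abs, sq_abs, conj_trivial]
    ring
  have variance_le : ∑ a, ‖n • u a - s‖ ^ 2 ≤ n ^ 2 * (n * V) := by
    have second_moment : ∑ a, ‖u a‖ ^ 2 ≤ n * V := by
      simpa [hn] using sum_le_card_nsmul univ (fun a ↦ ‖u a‖ ^ 2) V fun a _ ↦ hu a
    rw [variance_eq]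
    linarith [mul_le_mul_of_nonneg_left second_moment (sq_nonneg n),
      mul_nonneg n_pos.le (sq_nonneg ‖s‖)]
  simp only [error_eq]
  refine le_of_mul_le_mul_left ?_ n_pos
  calc n * ∑ w : Fin m → α, ‖∑ i, (n • u (w i) - s)‖ ^ 2
      = m * n ^ m * ∑ a, ‖n • u a - s‖ ^ 2 := card_mul_sum_norm_sq_sum_comp sum_centered m
    _ ≤ m * n ^ m * (n ^ 2 * (n * V)) := by gcongr
    _ = n * (n ^ m * (m * (n ^ 2 * V))) := by ring

theorem card_le_two_mul_card_filter_le {ι : Type*} {s : Finset ι} {f : ι → ℝ} {M : ℝ}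
    (hM : 0 < M) (hf : ∀ i ∈ s, 0 ≤ f i) (hs : ∑ i ∈ s, f i ≤ #s * M) :
    #s ≤ 2 * #{i ∈ s | f i ≤ 2 * M} := by
  have markov : #{i ∈ s | ¬ f i ≤ 2 * M} * (2 * M) ≤ #s * M := by
    calc #{i ∈ s | ¬ f i ≤ 2 * M} * (2 * M)
        ≤ ∑ i ∈ s with ¬ f i ≤ 2 * M, f i := by
          rw [← nsmul_eq_mul]
          exact card_nsmul_le_sum _ _ _ fun i hi ↦ (not_le.1 (mem_filter.1 hi).2).le
      _ ≤ ∑ i ∈ s, f i := sum_le_sum_of_subset_of_nonneg (filter_subset _ _) fun i hi _ ↦ hf i hi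
      _ ≤ #s * M := hs
  have few_large : #{i ∈ s | ¬ f i ≤ 2 * M} * 2 ≤ #s := by
    rw [← mul_assoc] at markov
    exact_mod_cast le_of_mul_le_mul_right markov hM
  have := card_filter_add_card_filter_not (s := s) (f · ≤ 2 * M)
  omega

theorem dist_subset_sum_le {m : ℕ} (hm : 0 < m) {u : α → E} {w : Fin m → α} {T T' : Finset α}
    {ε : ℝ} (hw : ∀ i, w i ∈ T ↔ w i ∈ T')
    (hT : ‖samplingError ((T : Set α).indicator u) w‖ ≤ m * ε / 2)
    (hT' : ‖samplingError ((T' : Set α).indicator u) w‖ ≤ m * ε / 2) :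
    dist (∑ a ∈ T, u a) (∑ a ∈ T', u a) ≤ ε := by
  classical
  have sub_eq : samplingError ((T' : Set α).indicator u) w -
      samplingError ((T : Set α).indicator u) w =
        (m : ℝ) • (∑ a ∈ T, u a - ∑ a ∈ T', u a) := by
    simp only [samplingError, sum_indicator_subset u (subset_univ _)]
    simp only [Set.indicator_apply, mem_coe, hw]
    module
  refine le_of_mul_le_mul_left ?_ (Nat.cast_pos.2 hm : (0 : ℝ) < m)
  calc (m : ℝ) * dist (∑ a ∈ T, u a) (∑ a ∈ T', u a)
      = ‖samplingError ((T' : Set α).indicator u) w -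
          samplingError ((T : Set α).indicator u) w‖ := by
        rw [sub_eq, norm_smul, dist_eq_norm, Real.norm_natCast]
    _ ≤ m * ε / 2 + m * ε / 2 := (norm_sub_le _ _).trans (add_le_add hT' hT)
    _ = m * ε := add_halves _

theorem exists_sample_card_le_two_mul [Nonempty α] {u : α → E} {V ε : ℝ}
    (hu : ∀ a, ‖u a‖ ^ 2 ≤ V) {m : ℕ} (hm : 8 * (Fintype.card α ^ 2 * V) < m * ε ^ 2)
    (𝒮 : Finset (Finset α)) :
    ∃ w : Fin m → α, #𝒮 ≤ 2 * #(𝒮.filter fun T : Finset α ↦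
      ‖samplingError ((T : Set α).indicator u) w‖ ^ 2 ≤ (m * ε / 2) ^ 2) := by
  have V_nonneg : 0 ≤ V := (sq_nonneg _).trans (hu (Classical.arbitrary α))
  have mul_sq_pos : 0 < m * ε ^ 2 := lt_of_le_of_lt (by positivity) hm
  have m_pos : (0 : ℝ) < m := pos_of_mul_pos_left mul_sq_pos (sq_nonneg ε)
  have error_le (T : Finset α) :
      ∑ w : Fin m → α, ‖samplingError ((T : Set α).indicator u) w‖ ^ 2 ≤
        (Fintype.card α : ℝ) ^ m * (m * (Fintype.card α ^ 2 * V)) :=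
    sum_norm_sq_samplingError_le (fun a ↦
      (pow_le_pow_left₀ (norm_nonneg _) (norm_indicator_le_norm_self _ _) 2).trans (hu a)) m
  have total_le : ∑ w : Fin m → α, ∑ T ∈ 𝒮, ‖samplingError ((T : Set α).indicator u) w‖ ^ 2 ≤
      ∑ _w : Fin m → α, #𝒮 * (m * (Fintype.card α ^ 2 * V)) := by
    rw [sum_comm]
    refine (sum_le_card_nsmul 𝒮 _ _ fun T _ ↦ error_le T).trans_eq ?_
    simp only [sum_const, card_univ, Fintype.card_fun, Fintype.card_fin, nsmul_eq_mul]
    push_cast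
    ring
  obtain ⟨w, -, hw⟩ := exists_le_of_sum_le univ_nonempty total_le
  have half_eq : 2 * (m * (m * ε ^ 2) / 8) = (m * ε / 2) ^ 2 := by ring
  refine ⟨w, half_eq ▸ card_le_two_mul_card_filter_le (by positivity)
    (fun _ _ ↦ by positivity) (hw.trans ?_)⟩
  gcongr
  have := mul_lt_mul_of_pos_left hm m_pos
  linarith

theorem card_le_of_pairwise_lt_dist_subset_sum [Nonempty α] {u : α → E} {V ε : ℝ} (hε : 0 ≤ ε)
    (hu : ∀ a, ‖u a‖ ^ 2 ≤ V) {m : ℕ} (hm : 8 * (Fintype.card α ^ 2 * V) < m * ε ^ 2)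
    {𝒮 : Finset (Finset α)}
    (h𝒮 : (𝒮 : Set (Finset α)).Pairwise fun T T' ↦ ε < dist (∑ a ∈ T, u a) (∑ a ∈ T', u a)) :
    #𝒮 ≤ 2 ^ (m + 1) := by
  classical
  have m_pos : 0 < m := by
    have V_nonneg : 0 ≤ V := (sq_nonneg _).trans (hu (Classical.arbitrary α))
    have : (0 : ℝ) < m * ε ^ 2 := lt_of_le_of_lt (by positivity) hm
    exact_mod_cast pos_of_mul_pos_left this (sq_nonneg ε)
  obtain ⟨w, hw⟩ := exists_sample_card_le_two_mul hu hm 𝒮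
  set good := 𝒮.filter fun T : Finset α ↦
    ‖samplingError ((T : Set α).indicator u) w‖ ^ 2 ≤ (m * ε / 2) ^ 2
  have norm_le {T : Finset α} (hT : T ∈ good) :
      ‖samplingError ((T : Set α).indicator u) w‖ ≤ m * ε / 2 :=
    le_of_sq_le_sq (mem_filter.1 hT).2 (by positivity)
  have pattern_injOn : Set.InjOn (fun (T : Finset α) i ↦ decide (w i ∈ T)) good := by
    intro T hT T' hT' same_pattern
    by_contra hne
    have hlt := h𝒮 (mem_filter.1 hT).1 (mem_filter.1 hT').1 hne
    exact hlt.not_ge (dist_subset_sum_le m_pos (fun i ↦ by simpa using congrFun same_pattern i)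
      (norm_le hT) (norm_le hT'))
  have good_card_le : #good ≤ 2 ^ m := by
    simpa using card_le_card_of_injOn (t := (univ : Finset (Fin m → Bool))) _ (by simp)
      pattern_injOn
  rw [pow_succ']
  exact hw.trans (Nat.mul_le_mul_left 2 good_card_le)

theorem packingNumber_subset_sums_le [Nonempty α] {u : α → E} {V : ℝ} {ε : ℝ≥0}
    (hu : ∀ a, ‖u a‖ ^ 2 ≤ V) {m : ℕ} (hm : 8 * (Fintype.card α ^ 2 * V) < m * ε ^ 2) :
    packingNumber ε (Set.range fun T : Finset α ↦ ∑ a ∈ T, u a) ≤ (2 ^ (m + 1) : ℕ) := by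
  classical
  refine iSup₂_le fun D hD ↦ iSup_le fun D_separated ↦ ?_
  obtain ⟨𝒯, rfl, 𝒯_injOn⟩ := Set.exists_image_eq_injOn_of_subset_range hD
  rw [𝒯_injOn.encard_image, ← Set.coe_toFinset 𝒯, Set.encard_coe_eq_coe_finsetCard, Nat.cast_le]
  refine card_le_of_pairwise_lt_dist_subset_sum ε.coe_nonneg hu hm fun T hT T' hT' hne ↦ ?_
  rw [Set.coe_toFinset] at hT hT'
  have : ε < edist (∑ a ∈ T, u a) (∑ a ∈ T', u a) :=
    D_separated (Set.mem_image_of_mem _ hT) (Set.mem_image_of_mem _ hT') (𝒯_injOn.ne hT hT' hne)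
  rwa [edist_nndist, ENNReal.coe_lt_coe, ← NNReal.coe_lt_coe, coe_nndist] at this

end Sampling

theorem exists_finset_isCover_univ_of_isometry {X Y : Type*} [PseudoEMetricSpace X]
    [PseudoEMetricSpace Y] {F : X → Y} (hF : Isometry F) {ε : ℝ≥0} {K : ℕ}
    (hK : coveringNumber ε (Set.range F) ≤ K) :
    ∃ N : Finset X, #N ≤ K ∧ IsCover ε Set.univ (N : Set X) := by
  obtain ⟨D, hD, D_finite, D_cover, D_encard⟩ :=
    exists_set_encard_eq_coveringNumber (ne_top_of_le_ne_top (ENat.natCast_ne_top K) hK)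
  obtain ⟨N, rfl, N_injOn⟩ := Set.exists_image_eq_injOn_of_subset_range hD
  have N_finite : N.Finite := D_finite.of_finite_image N_injOn
  refine ⟨N_finite.toFinset, ?_, ?_⟩
  · rw [← Nat.cast_le (α := ℕ∞), ← N_finite.encard_eq_coe_toFinset_card,
      ← N_injOn.encard_image, D_encard]
    exact hK
  · rwa [N_finite.coe_toFinset, ← hF.isCover_image_iff, Set.image_univ]

section LeftInvariantMetric

variable {G : Type*} [Group G] [DecidableEq G] [PseudoMetricSpace G] [IsIsometricSMul G G]
  {A B C : Finset G} {ε : ℝ}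

theorem dist_mul_le_three_mul {S : Finset G} {x y z : G} {q : ℝ}
    (hS : ∀ s ∈ S, dist (s * y) x ≤ q) (hz : z ∈ S * S⁻¹ * S) : dist (z * y) x ≤ 3 * q := by
  obtain ⟨_, hst, s₃, hs₃, rfl⟩ := mem_mul.1 hz
  obtain ⟨s₁, hs₁, _, hs₂_inv, rfl⟩ := mem_mul.1 hst
  obtain ⟨s₂, hs₂, rfl⟩ := mem_inv.1 hs₂_inv
  calc dist (s₁ * s₂⁻¹ * s₃ * y) x
      ≤ dist (s₁ * s₂⁻¹ * (s₃ * y)) (s₁ * s₂⁻¹ * (s₂ * y)) + dist (s₁ * y) x := by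
        simpa [mul_assoc] using dist_triangle (s₁ * (s₂⁻¹ * (s₃ * y))) (s₁ * y) x
    _ = dist (s₃ * y) (s₂ * y) + dist (s₁ * y) x := by rw [dist_mul_left]
    _ ≤ (q + q) + q := by
        gcongr
        · exact (dist_triangle_right _ _ x).trans (add_le_add (hS _ hs₃) (hS _ hs₂))
        · exact hS _ hs₁
    _ = 3 * q := by ring

namespace RegularPosition

theorem dist_le_nine_mul (h : RegularPosition A B C ε) {A₀ B₀ C₀ : Finset G}
    (hA₀ : A₀ ⊆ A) (hB₀ : B₀ ⊆ B) (hC₀ : C₀ ⊆ C) (hA : ε * #A ≤ #A₀) (hB : ε * #B ≤ #B₀)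
    (hC : ε * #C ≤ #C₀) {x y z : G} {q : ℝ} (hAx : ∀ a ∈ A₀, dist (a * y) x ≤ q)
    (hBy : ∀ b ∈ B₀, dist b y ≤ q) (hCz : ∀ c ∈ C₀, dist c z ≤ q) : dist x z ≤ 9 * q := by
  obtain ⟨_, hmem⟩ := h A₀ hA₀ B₀ hB₀ C₀ hC₀ hA hB hC
  obtain ⟨hab, hc⟩ := mem_inter.1 hmem
  obtain ⟨a, ha, b, hb, rfl⟩ := mem_mul.1 hab
  have hax : dist (a * y) x ≤ 3 * q := dist_mul_le_three_mul hAx ha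
  have hby : dist b y ≤ 3 * q := by
    simpa using dist_mul_le_three_mul (y := 1) (by simpa using hBy) hb
  have hcz : dist (a * b) z ≤ 3 * q := by
    simpa using dist_mul_le_three_mul (y := 1) (by simpa using hCz) hc
  calc dist x z ≤ dist x (a * y) + dist (a * y) (a * b) + dist (a * b) z := dist_triangle4 ..
    _ = dist (a * y) x + dist b y + dist (a * b) z := by
        rw [dist_mul_left, dist_comm x, dist_comm y]
    _ ≤ 9 * q := by linarith

theorem card_mul_card_mul_card_le (h : RegularPosition A B C ε) (hε : 0 ≤ ε) {A₀ B₀ C₀ : Finset G}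
    (hA₀ : A₀ ⊆ A) (hB₀ : B₀ ⊆ B) (hC₀ : C₀ ⊆ C) {x y z : G} {q : ℝ}
    (hAx : ∀ a ∈ A₀, dist (a * y) x ≤ q) (hBy : ∀ b ∈ B₀, dist b y ≤ q)
    (hCz : ∀ c ∈ C₀, dist c z ≤ q) (hxz : 9 * q < dist x z) :
    #A₀ * #B₀ * #C₀ ≤ ε * (#A * #B * #C) := by
  by_contra! large
  have dense_A : ε * #A ≤ #A₀ := by
    by_contra! hA
    have : (#A₀ : ℝ) * #B₀ * #C₀ ≤ (ε * #A) * #B * #C := by gcongr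
    linarith
  have dense_B : ε * #B ≤ #B₀ := by
    by_contra! hB
    have : (#A₀ : ℝ) * #B₀ * #C₀ ≤ #A * (ε * #B) * #C := by gcongr
    linarith
  have dense_C : ε * #C ≤ #C₀ := by
    by_contra! hC
    have : (#A₀ : ℝ) * #B₀ * #C₀ ≤ #A * #B * (ε * #C) := by gcongr
    linarith
  exact hxz.not_ge (h.dist_le_nine_mul hA₀ hB₀ hC₀ dense_A dense_B dense_C hAx hBy hCz)

theorem card_filter_lt_dist_le (h : RegularPosition A B C ε) (hε : 0 ≤ ε) {q : ℝ≥0}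
    {N : Finset G} (hN : IsCover q Set.univ (N : Set G)) :
    #{p ∈ A ×ˢ B ×ˢ C | 12 * (q : ℝ) < dist (p.1 * p.2.1) p.2.2} ≤
      #N ^ 3 * (ε * (#A * #B * #C)) := by
  set far := {p ∈ A ×ˢ B ×ˢ C | 12 * (q : ℝ) < dist (p.1 * p.2.1) p.2.2}
  have near (x : G) : ∃ y ∈ N, dist x y ≤ q := by
    simpa using isCover_iff_subset_iUnion_closedBall.1 hN (Set.mem_univ x)
  choose φ φ_mem dist_φ using near
  by_contra! far_large
  -- Approximating `a * φ b` rather than `a * b` places each fibre inside a product set.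
  obtain ⟨⟨x, y, z⟩, -, fiber_large⟩ := exists_lt_card_fiber_of_nsmul_lt_card_of_maps_to
    (s := far) (t := N ×ˢ N ×ˢ N) (f := fun p ↦ (φ (p.1 * φ p.2.1), φ p.2.1, φ p.2.2))
    (b := ε * (#A * #B * #C)) (by simp [φ_mem]) (by simpa [pow_succ, mul_assoc] using far_large)
  set fiber := {p ∈ far | (φ (p.1 * φ p.2.1), φ p.2.1, φ p.2.2) = (x, y, z)}
  obtain ⟨⟨a, b, c⟩, abc_mem⟩ : fiber.Nonempty := by
    have bound_nonneg : 0 ≤ ε * (#A * #B * #C) := by positivity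
    exact card_pos.1 (by exact_mod_cast bound_nonneg.trans_lt fiber_large)
  have lt_dist : 9 * (q : ℝ) < dist x z := by
    simp only [fiber, far, mem_filter, Prod.mk.injEq] at abc_mem
    obtain ⟨⟨-, habc⟩, rfl, rfl, rfl⟩ := abc_mem
    have hb : dist (a * b) (a * φ b) ≤ q := by simpa using dist_φ b
    have := dist_triangle4 (a * b) (a * φ b) (φ (a * φ b)) c
    have := dist_triangle_right (φ (a * φ b)) c (φ c)
    linarith [dist_φ (a * φ b), dist_φ c]
  set A₀ := {a ∈ A | φ (a * y) = x}
  set B₀ := {b ∈ B | φ b = y}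
  set C₀ := {c ∈ C | φ c = z}
  have fiber_subset : fiber ⊆ A₀ ×ˢ B₀ ×ˢ C₀ := by
    intro p hp
    simp only [fiber, far, A₀, B₀, C₀, mem_filter, mem_product, Prod.mk.injEq] at hp ⊢
    grind
  have card_fiber_le : (#fiber : ℝ) ≤ #A₀ * #B₀ * #C₀ := by
    rw [mul_assoc]
    exact_mod_cast (card_le_card fiber_subset).trans_eq (by simp only [card_product])
  exact fiber_large.not_ge <| card_fiber_le.trans <| h.card_mul_card_mul_card_le hε
    (filter_subset _ _) (filter_subset _ _) (filter_subset _ _)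
    (fun a ha ↦ (mem_filter.1 ha).2 ▸ dist_φ _) (fun b hb ↦ (mem_filter.1 hb).2 ▸ dist_φ _)
    (fun c hc ↦ (mem_filter.1 hc).2 ▸ dist_φ _) lt_dist

end RegularPosition

end LeftInvariantMetric

section RightTranslates

variable {G : Type*} [Group G] [Fintype G]

/-- The right translate `t ↦ f (t * x)` of `f`, as a vector of `ℓ²(G)`. -/
def rightTranslate (f : G → ℝ) (x : G) : EuclideanSpace ℝ G := WithLp.toLp 2 fun t ↦ f (t * x)

theorem norm_sq_rightTranslate (f : G → ℝ) (x : G) : ‖rightTranslate f x‖ ^ 2 = ∑ t, f t ^ 2 := by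
  rw [EuclideanSpace.real_norm_sq_eq]
  exact Equiv.sum_comp (Equiv.mulRight x) fun t ↦ f t ^ 2

theorem dist_rightTranslate_sq (f : G → ℝ) (x y : G) :
    dist (rightTranslate f x) (rightTranslate f y) ^ 2 = ∑ t, (f (t * x) - f (t * y)) ^ 2 := by
  rw [dist_eq_norm, EuclideanSpace.real_norm_sq_eq]
  rfl

theorem dist_rightTranslate_mul_left (f : G → ℝ) (g x y : G) :
    dist (rightTranslate f (g * x)) (rightTranslate f (g * y)) =
      dist (rightTranslate f x) (rightTranslate f y) := by
  rw [← sq_eq_sq₀ dist_nonneg dist_nonneg, dist_rightTranslate_sq, dist_rightTranslate_sq,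
    ← Equiv.sum_comp (Equiv.mulRight g) fun t ↦ (f (t * x) - f (t * y)) ^ 2]
  simp [mul_assoc]

/-- The pseudometric on `G` in which the distance of two points is the `ℓ²`-distance of the
corresponding right translates of `f`. -/
noncomputable abbrev translatePseudoMetric (f : G → ℝ) : PseudoMetricSpace G :=
  .induced (rightTranslate f) inferInstance

theorem isIsometricSMul_translatePseudoMetric (f : G → ℝ) :
    letI := translatePseudoMetric f
    IsIsometricSMul G G :=
  letI := translatePseudoMetric f
  ⟨fun g ↦ .of_dist_eq fun x y ↦ dist_rightTranslate_mul_left f g x y⟩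

theorem sum_sq_sub_of_dist_rightTranslate_le (f : G → ℝ) (ρ : ℝ) :
    ∑ p : G × G with dist (rightTranslate f p.1) (rightTranslate f p.2) ≤ ρ,
      (f p.1 - f p.2) ^ 2 ≤ Fintype.card G * ρ ^ 2 := by
  have dist_mul (x t : G) : dist (rightTranslate f x) (rightTranslate f (x * t)) =
      dist (rightTranslate f 1) (rightTranslate f t) := by
    simpa using dist_rightTranslate_mul_left f x 1 t
  rw [sum_filter, Fintype.sum_prod_type]
  calc _ = ∑ x, ∑ t, if dist (rightTranslate f x) (rightTranslate f (x * t)) ≤ ρ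
          then (f x - f (x * t)) ^ 2 else 0 :=
        sum_congr rfl fun x _ ↦ (Equiv.sum_comp (Equiv.mulLeft x) _).symm
    _ = ∑ t, if dist (rightTranslate f 1) (rightTranslate f t) ≤ ρ
          then dist (rightTranslate f 1) (rightTranslate f t) ^ 2 else 0 := by
        rw [sum_comm]
        simp only [dist_mul, dist_rightTranslate_sq, mul_one]
        exact sum_congr rfl fun t _ ↦ by split_ifs <;> simp
    _ ≤ ∑ _t : G, ρ ^ 2 := by
        gcongr
        split_ifs with h
        · gcongr
        · positivity
    _ = Fintype.card G * ρ ^ 2 := by simp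

theorem sum_sq_mul_sub_of_dist_rightTranslate_le (f : G → ℝ) (ρ : ℝ) (A B C : Finset G) :
    ∑ p ∈ A ×ˢ B ×ˢ C with dist (rightTranslate f (p.1 * p.2.1)) (rightTranslate f p.2.2) ≤ ρ,
      (f (p.1 * p.2.1) - f p.2.2) ^ 2 ≤ #A * (Fintype.card G * ρ ^ 2) := by
  rw [sum_filter, sum_product, ← nsmul_eq_mul]
  refine sum_le_card_nsmul A _ _ fun a _ ↦ ?_
  calc _ ≤ ∑ p : G × G, if dist (rightTranslate f (a * p.1)) (rightTranslate f p.2) ≤ ρ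
          then (f (a * p.1) - f p.2) ^ 2 else 0 :=
        sum_le_univ_sum_of_nonneg fun p ↦ by positivity
    _ = ∑ p : G × G, if dist (rightTranslate f p.1) (rightTranslate f p.2) ≤ ρ
          then (f p.1 - f p.2) ^ 2 else 0 :=
        Equiv.sum_comp ((Equiv.mulLeft a).prodCongr (.refl G)) fun p ↦
          if dist (rightTranslate f p.1) (rightTranslate f p.2) ≤ ρ
            then (f p.1 - f p.2) ^ 2 else 0
    _ ≤ Fintype.card G * ρ ^ 2 := by
        rw [← sum_filter]
        exact sum_sq_sub_of_dist_rightTranslate_le f ρ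

theorem sq_sum_mul_sub_of_dist_rightTranslate_le (f : G → ℝ) (ρ : ℝ) (A B C : Finset G) :
    (∑ p ∈ A ×ˢ B ×ˢ C with dist (rightTranslate f (p.1 * p.2.1)) (rightTranslate f p.2.2) ≤ ρ,
      (f (p.1 * p.2.1) - f p.2.2)) ^ 2 ≤ Fintype.card G ^ 5 * ρ ^ 2 := by
  set n : ℝ := (Fintype.card G : ℝ) with hn
  have card_le (S : Finset G) : (#S : ℝ) ≤ n := by simpa [hn] using card_le_univ S
  have card_near_le : (#{p ∈ A ×ˢ B ×ˢ C |
      dist (rightTranslate f (p.1 * p.2.1)) (rightTranslate f p.2.2) ≤ ρ} : ℝ) ≤ n ^ 3 := by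
    refine (Nat.cast_le.2 (card_le_univ _)).trans_eq ?_
    simp only [Fintype.card_prod, Nat.cast_mul]
    ring
  calc _ ≤ n ^ 3 * (n * (n * ρ ^ 2)) := by
        refine sq_sum_le_card_mul_sum_sq.trans ?_
        gcongr
        refine (sum_sq_mul_sub_of_dist_rightTranslate_le f ρ A B C).trans ?_
        gcongr
        exact card_le A
    _ = n ^ 5 * ρ ^ 2 := by ring

end RightTranslates

section Convolution

variable {G : Type*} [Group G] [DecidableEq G] (A B C : Finset G)

theorem rightTranslate_convolution (x : G) :
    rightTranslate (fun y ↦ (A.convolution B y : ℝ)) x =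
      ∑ v ∈ x • B⁻¹, rightTranslate ((A : Set G).indicator 1) v := by
  ext t
  have := card_smul_inter_smul A B⁻¹ t⁻¹ x
  rw [inv_inv, inv_inv] at this
  simp only [rightTranslate, ← this, WithLp.ofLp_sum, Finset.sum_apply, Set.indicator_apply,
    inter_comm (t⁻¹ • A), ← filter_mem_eq_inter, mem_inv_smul_finset_iff]
  simp

theorem sum_convolution_mul : ∑ p ∈ A ×ˢ B, A.convolution B (p.1 * p.2) = Eₘ[A, B] := by
  simp only [mulEnergy_eq_card_filter, card_filter, sum_product (A ×ˢ B) (A ×ˢ B), convolution,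
    eq_comm]

theorem sum_convolution_mul_sub_convolution :
    ∑ p ∈ A ×ˢ B ×ˢ C, ((A.convolution B (p.1 * p.2.1) : ℝ) - A.convolution B p.2.2) =
      #C * Eₘ[A, B] - #A * #B * #{p ∈ A ×ˢ B | p.1 * p.2 ∈ C} := by
  have sum_left : ∑ a ∈ A, ∑ b ∈ B, A.convolution B (a * b) = Eₘ[A, B] := by
    rw [← sum_convolution_mul, sum_product]
  have sum_right : ∑ c ∈ C, A.convolution B c = #{p ∈ A ×ˢ B | p.1 * p.2 ∈ C} :=
    sum_card_fiberwise_eq_card_filter _ _ _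
  rw [sum_sub_distrib, ← sum_left, ← sum_right]
  simp only [sum_product, sum_const, nsmul_eq_mul, ← mul_sum]
  push_cast
  ring

end Convolution

theorem card_mul_triples_eq {M : Type*} [Mul M] [DecidableEq M] (A B C : Finset M) :
    Nat.card {p : M × M × M // p.1 ∈ A ∧ p.2.1 ∈ B ∧ p.2.2 ∈ C ∧ p.1 * p.2.1 = p.2.2} =
      #{p ∈ A ×ˢ B | p.1 * p.2 ∈ C} := by
  rw [← Nat.card_eq_finsetCard]
  exact Nat.card_congr
    { toFun := fun p ↦ ⟨(p.1.1, p.1.2.1), by obtain ⟨p, h⟩ := p; grind⟩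
      invFun := fun p ↦ ⟨(p.1.1, p.1.2, p.1.1 * p.1.2), by obtain ⟨p, h⟩ := p; grind⟩
      left_inv := by grind
      right_inv := by grind }

section Counting

variable {G : Type*} [Group G] [Fintype G] [DecidableEq G] {A B C : Finset G}

theorem exists_isCover_translatePseudoMetric_convolution (A B : Finset G) {m : ℕ} {q : ℝ≥0}
    (hq : 8 * (Fintype.card G : ℝ) ^ 3 < m * q ^ 2) :
    letI := translatePseudoMetric fun x ↦ (A.convolution B x : ℝ)
    ∃ N : Finset G, #N ≤ 2 ^ (m + 1) ∧ IsCover q Set.univ (N : Set G) := by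
  let := translatePseudoMetric fun x ↦ (A.convolution B x : ℝ)
  have range_subset : Set.range (rightTranslate fun x ↦ (A.convolution B x : ℝ)) ⊆
      Set.range fun T : Finset G ↦ ∑ v ∈ T, rightTranslate ((A : Set G).indicator 1) v := by
    rintro _ ⟨x, rfl⟩
    exact ⟨x • B⁻¹, (rightTranslate_convolution A B x).symm⟩
  have norm_le (v : G) : ‖rightTranslate ((A : Set G).indicator 1) v‖ ^ 2 ≤ Fintype.card G := by
    simp [norm_sq_rightTranslate, Set.indicator_apply, ite_pow, card_le_univ]
  have packing_le : packingNumber q (Set.range (rightTranslate fun x ↦ (A.convolution B x : ℝ))) ≤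
      (2 ^ (m + 1) : ℕ) :=
    iSup₂_le fun D hD ↦ iSup_le fun D_separated ↦
      (D_separated.encard_le_packingNumber (hD.trans range_subset)).trans
        (packingNumber_subset_sums_le norm_le (by linarith))
  exact exists_finset_isCover_univ_of_isometry
    (F := rightTranslate fun x ↦ (A.convolution B x : ℝ)) (.of_dist_eq fun _ _ ↦ rfl)
    ((coveringNumber_le_packingNumber q _).trans packing_le)

theorem RegularPosition.card_filter_lt_dist_rightTranslate_le {κ : ℝ} (hκ : 0 ≤ κ) {m : ℕ}
    (hm : 1152 < m * κ ^ 2) (h : RegularPosition A B C (κ / (2 ^ (m + 1)) ^ 3)) :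
    #{p ∈ A ×ˢ B ×ˢ C | κ * √(Fintype.card G ^ 3) <
      dist (rightTranslate (fun x ↦ (A.convolution B x : ℝ)) (p.1 * p.2.1))
        (rightTranslate (fun x ↦ (A.convolution B x : ℝ)) p.2.2)} ≤
      κ * (Fintype.card G : ℝ) ^ 3 := by
  set n : ℝ := (Fintype.card G : ℝ) with hn
  have n_pos : 0 < n := by simp [hn, Fintype.card_pos]
  have card_le (S : Finset G) : (#S : ℝ) ≤ n := by simpa [hn] using card_le_univ S
  let := translatePseudoMetric fun x ↦ (A.convolution B x : ℝ)
  have := isIsometricSMul_translatePseudoMetric fun x ↦ (A.convolution B x : ℝ)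
  let q : ℝ≥0 := ⟨κ * √(n ^ 3) / 12, by positivity⟩
  have q_large : 8 * n ^ 3 < m * (q : ℝ) ^ 2 := by
    calc 8 * n ^ 3 = 1152 * n ^ 3 / 144 := by ring
      _ < m * κ ^ 2 * n ^ 3 / 144 := by gcongr
      _ = m * (κ * √(n ^ 3) / 12) ^ 2 := by
        rw [div_pow, mul_pow, Real.sq_sqrt (by positivity)]
        ring
  obtain ⟨N, card_N_le, N_cover⟩ := exists_isCover_translatePseudoMetric_convolution A B q_large
  rw [← mul_div_cancel₀ (κ * √(n ^ 3)) (by norm_num : (12 : ℝ) ≠ 0)]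
  calc _ ≤ #N ^ 3 * (κ / (2 ^ (m + 1)) ^ 3 * (#A * #B * #C)) :=
        h.card_filter_lt_dist_le (by positivity) N_cover
    _ ≤ (2 ^ (m + 1)) ^ 3 * (κ / (2 ^ (m + 1)) ^ 3 * (n * n * n)) := by
        gcongr
        · exact_mod_cast card_N_le
        all_goals exact card_le _
    _ = κ * n ^ 3 := by field_simp

theorem RegularPosition.card_mul_mulEnergy_le {κ : ℝ} (hκ : 0 ≤ κ) {m : ℕ}
    (hm : 1152 < m * κ ^ 2) (h : RegularPosition A B C (κ / (2 ^ (m + 1)) ^ 3)) :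
    #C * Eₘ[A, B] ≤ #A * #B * #{p ∈ A ×ˢ B | p.1 * p.2 ∈ C} + 2 * κ * Fintype.card G ^ 4 := by
  set n : ℝ := (Fintype.card G : ℝ)
  set f : G → ℝ := fun x ↦ A.convolution B x
  set far := {p ∈ A ×ˢ B ×ˢ C | ¬ dist (rightTranslate f (p.1 * p.2.1)) (rightTranslate f p.2.2) ≤
    κ * √(n ^ 3)}
  have far_sum_le : ∑ p ∈ far, (f (p.1 * p.2.1) - f p.2.2) ≤ κ * n ^ 4 := by
    have f_le (x : G) : f x ≤ n := Nat.cast_le.2 (convolution_le_card_left.trans (card_le_univ A))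
    have card_far_le : #far ≤ κ * n ^ 3 := by
      simpa only [far, not_le] using h.card_filter_lt_dist_rightTranslate_le hκ hm
    calc ∑ p ∈ far, (f (p.1 * p.2.1) - f p.2.2) ≤ #far * n := by
          rw [← nsmul_eq_mul]
          exact sum_le_card_nsmul _ _ _ fun p _ ↦
            (sub_le_self _ (Nat.cast_nonneg _)).trans (f_le _)
      _ ≤ κ * n ^ 3 * n := by gcongr
      _ = κ * n ^ 4 := by ring
  have near_sum_le : ∑ p ∈ A ×ˢ B ×ˢ C with
      dist (rightTranslate f (p.1 * p.2.1)) (rightTranslate f p.2.2) ≤ κ * √(n ^ 3),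
        (f (p.1 * p.2.1) - f p.2.2) ≤ κ * n ^ 4 := by
    refine le_of_sq_le_sq ((sq_sum_mul_sub_of_dist_rightTranslate_le f _ A B C).trans_eq ?_)
      (by positivity)
    rw [mul_pow, Real.sq_sqrt (by positivity)]
    ring
  have := sum_convolution_mul_sub_convolution A B C
  rw [← sum_filter_add_sum_filter_not _ (fun p ↦
    dist (rightTranslate f (p.1 * p.2.1)) (rightTranslate f p.2.2) ≤ κ * √(n ^ 3))] at this
  linarith

theorem pow_mul_pow_le_mulEnergy {δ : ℝ} (hδ : 0 ≤ δ) (hA : δ * Fintype.card G ≤ #A)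
    (hB : δ * Fintype.card G ≤ #B) : δ ^ 4 * Fintype.card G ^ 3 ≤ Eₘ[A, B] := by
  set n : ℝ := (Fintype.card G : ℝ) with hn
  have n_pos : 0 < n := by simp [hn, Fintype.card_pos]
  have cauchy_schwarz : (#A : ℝ) ^ 2 * #B ^ 2 ≤ #(A * B) * Eₘ[A, B] :=
    mod_cast le_card_mul_mul_mulEnergy A B
  have card_mul_le : (#(A * B) : ℝ) ≤ n := by simpa [hn] using card_le_univ (A * B)
  refine le_of_mul_le_mul_left ?_ n_pos
  calc n * (δ ^ 4 * n ^ 3) = (δ * n) ^ 2 * (δ * n) ^ 2 := by ring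
    _ ≤ (#A : ℝ) ^ 2 * #B ^ 2 := by gcongr
    _ ≤ n * Eₘ[A, B] := cauchy_schwarz.trans (by gcongr)

theorem stmt_9_general {δ : ℝ} (hδ : 0 < δ) {m : ℕ} (hm : 18432 < m * δ ^ 10)
    (hA : δ * Fintype.card G ≤ #A) (hB : δ * Fintype.card G ≤ #B) (hC : δ * Fintype.card G ≤ #C)
    (h : RegularPosition A B C (δ ^ 5 / 4 / (2 ^ (m + 1)) ^ 3)) :
    δ ^ 5 / 4 * (Fintype.card G : ℝ) ^ 2 <
      Nat.card {p : G × G × G // p.1 ∈ A ∧ p.2.1 ∈ B ∧ p.2.2 ∈ C ∧ p.1 * p.2.1 = p.2.2} := by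
  set n : ℝ := (Fintype.card G : ℝ) with hn
  have n_pos : 0 < n := by simp [hn, Fintype.card_pos]
  rw [card_mul_triples_eq]
  by_contra! few
  have card_le (S : Finset G) : (#S : ℝ) ≤ n := by simpa [hn] using card_le_univ S
  have : δ ^ 5 * n ^ 4 ≤ 3 / 4 * (δ ^ 5 * n ^ 4) := by
    calc δ ^ 5 * n ^ 4 = (δ * n) * (δ ^ 4 * n ^ 3) := by ring
      _ ≤ (#C : ℝ) * Eₘ[A, B] := by
        gcongr
        exact pow_mul_pow_le_mulEnergy hδ.le hA hB
      _ ≤ #A * #B * #{p ∈ A ×ˢ B | p.1 * p.2 ∈ C} + 2 * (δ ^ 5 / 4) * n ^ 4 :=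
        h.card_mul_mulEnergy_le (by positivity) (by linarith)
      _ ≤ n * n * (δ ^ 5 / 4 * n ^ 2) + 2 * (δ ^ 5 / 4) * n ^ 4 := by
        gcongr <;> exact card_le _
      _ = 3 / 4 * (δ ^ 5 * n ^ 4) := by ring
  have : 0 < δ ^ 5 * n ^ 4 := by positivity
  linarith

end Counting

theorem stmt_9 (δ : ℝ) (hδ : 0 < δ) :
    ∃ η : ℝ, 0 < η ∧ ∃ ε : ℝ, 0 < ε ∧
      ∀ (G : Type) [Group G] [Fintype G] [DecidableEq G] (A B C : Finset G),
        δ * Fintype.card G ≤ A.card →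
        δ * Fintype.card G ≤ B.card →
        δ * Fintype.card G ≤ C.card →
        RegularPosition A B C ε →
        η * (Fintype.card G : ℝ) ^ 2 <
          (Nat.card {p : G × G × G //
            p.1 ∈ A ∧ p.2.1 ∈ B ∧ p.2.2 ∈ C ∧ p.1 * p.2.1 = p.2.2} : ℝ) := by
  obtain ⟨m, hm⟩ := exists_nat_gt (18432 / δ ^ 10)
  exact ⟨δ ^ 5 / 4, by positivity, δ ^ 5 / 4 / (2 ^ (m + 1)) ^ 3, by positivity,
    fun G _ _ _ A B C ↦ stmt_9_general hδ ((div_lt_iff₀ (by positivity)).1 hm)⟩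
end

section
/- Fix a natural number n ≥ 2 and, for every nonempty subset F of {1,...,n}, a real number δ_F > 0. There exist ε = ε(n, (δ_F)) > 0 and η = η(n, (δ_F)) > 0 such that for every finite group G and every family of subsets A_F ⊆ G with |A_F| ≥ δ_F·|G| for each nonempty F ⊆ {1,...,n}, such that each A_F is product-rich up to ε, the number of tuples (a_1,...,a_n) ∈ G^n with a_F ∈ A_F for all nonempty F ⊆ {1,...,n} is at least η·|G|^n. -/
open Pointwise

/-- A finite subset `A` of a group is product-rich up to `ε` if `A₀·A₀` meets `A₀`
whenever `A₀ ⊆ A` has relative density at least `ε` in `A`. -/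
def ProductRich {G : Type*} [Group G] [DecidableEq G] (A : Finset G) (ε : ℝ) : Prop :=
  ∀ A₀ ⊆ A, ε * A.card ≤ A₀.card → (A₀ * A₀ ∩ A₀).Nonempty

/-!
Write `S ∗ T` for the convolution of the indicator functions of `S` and `T`. Up to a small `ℓ¹`
error, its translates are determined by boundedly many samples: for suitable `u₁, …, uₖ` and most
`t`, the pattern of those `j` with `t * uⱼ ∈ S` determines `x ↦ (S ∗ T) (t * x)`. Colour each such
`t` by its pattern. If too many elements of a product-rich set `A` moved `S ∗ T` far, some colour
class of them would contain `x`, `y` and `x * y`; translating by `x * y` and by `y` would then have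
nearly the same effect, so that `x` hardly moves `S ∗ T`, a contradiction. Hence most elements of
`A` are almost periods of `S ∗ T`.

For dense product-rich `A`, `B`, `C`, invariance of `A ∗ B` under `A`, and of `A⁻¹ ∗ A` under `B`
and `C`, compares the number of `(a, b) ∈ A × B` with `a * b ∈ C` to the multiplicative energy of
`A` and `B`, which is large by Cauchy–Schwarz. Applied to the subset of those `x ∈ A` that have few
`y ∈ B` with `x * y ∈ C`, this shows that the subset is small. The theorem follows by induction on
`n`, fixing the first coordinate of the tuple.
-/

universe u

section Sampling

open Finset

lemma exists_norm_sum_sq_le {ι E : Type*} [Fintype ι] [Nonempty ι] [NormedAddCommGroup E]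
    [InnerProductSpace ℝ E] {Y : ι → E} (hY : ∑ i, Y i = 0) {M : ℝ}
    (hM : ∑ i, ‖Y i‖ ^ 2 ≤ Fintype.card ι * M) (k : ℕ) :
    ∃ u : Fin k → ι, ‖∑ j, Y (u j)‖ ^ 2 ≤ k * M := by
  induction k with
  | zero => exact ⟨Fin.elim0, by simp⟩
  | succ k ih =>
    obtain ⟨u, hu⟩ := ih
    set e := ∑ j, Y (u j)
    -- Greedy choice of the next point: the cross terms `2⟪Y i, e⟫` average to zero over `i`.
    have sum_sq : ∑ i, ‖Y i + e‖ ^ 2 = ∑ i, ‖Y i‖ ^ 2 + Fintype.card ι * ‖e‖ ^ 2 := by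
      simp [norm_add_sq_real, sum_add_distrib, ← mul_sum, ← sum_inner, hY]
    obtain ⟨i, -, hi⟩ : ∃ i ∈ univ, ‖Y i + e‖ ^ 2 ≤ (k + 1) * M := by
      refine exists_le_of_sum_le univ_nonempty ?_
      rw [sum_sq, sum_const, card_univ, nsmul_eq_mul, add_one_mul, mul_add, add_comm]
      gcongr
    exact ⟨Fin.cons i u, by simpa [Fin.sum_univ_succ] using hi⟩

lemma sum_sq_card_mul_sub_sum_le {ι : Type*} [Fintype ι] {x : ι → ℝ} (hx : ∀ i, |x i| ≤ 1) :
    ∑ i, (Fintype.card ι * x i - ∑ l, x l) ^ 2 ≤ (Fintype.card ι : ℝ) ^ 3 := by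
  set N : ℝ := (Fintype.card ι : ℝ) with hN
  have sum_sq_le : ∑ i, x i ^ 2 ≤ N := by
    simpa [hN] using sum_le_card_nsmul univ (fun i ↦ x i ^ 2) 1
      fun i _ ↦ (sq_le_one_iff_abs_le_one _).2 (hx i)
  calc ∑ i, (N * x i - ∑ l, x l) ^ 2
      = N ^ 2 * ∑ i, x i ^ 2 - N * (∑ l, x l) ^ 2 := by
        simp only [sub_sq, mul_pow, sum_add_distrib, sum_sub_distrib, ← mul_sum, ← sum_mul,
          sum_const, card_univ, nsmul_eq_mul, ← hN]
        ring
    _ ≤ N ^ 2 * N - 0 := by gcongr; positivity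
    _ = N ^ 3 := by ring

lemma exists_sum_abs_sample_sub_le {ι κ : Type*} [Fintype ι] [Nonempty ι] [Fintype κ]
    {X : ι → κ → ℝ} (hX : ∀ i p, |X i p| ≤ 1) (k : ℕ) :
    ∃ u : Fin k → ι, ∑ p, |Fintype.card ι * ∑ j, X (u j) p - k * ∑ i, X i p| ≤
      √k * Fintype.card ι * Fintype.card κ := by
  set N : ℝ := (Fintype.card ι : ℝ) with hN
  let Y : ι → EuclideanSpace ℝ κ := fun i ↦ WithLp.toLp 2 fun p ↦ N * X i p - ∑ l, X l p
  have hY : ∑ i, Y i = 0 := by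
    ext p
    simp [Y, WithLp.ofLp_sum, sum_sub_distrib, ← mul_sum, hN]
  have hM : ∑ i, ‖Y i‖ ^ 2 ≤ N * (N ^ 2 * Fintype.card κ) := by
    simp only [EuclideanSpace.real_norm_sq_eq]
    rw [sum_comm]
    calc _ ≤ ∑ _p : κ, N ^ 3 := sum_le_sum fun p _ ↦ sum_sq_card_mul_sub_sum_le fun i ↦ hX i p
      _ = _ := by rw [sum_const, card_univ, nsmul_eq_mul]; ring
  obtain ⟨u, hu⟩ := exists_norm_sum_sq_le hY hM k
  have hYu (p : κ) : (∑ j, Y (u j)) p = N * ∑ j, X (u j) p - k * ∑ i, X i p := by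
    simp [Y, WithLp.ofLp_sum, sum_sub_distrib, mul_sum]
  rw [EuclideanSpace.real_norm_sq_eq] at hu
  simp only [hYu] at hu
  refine ⟨u, le_of_sq_le_sq ?_ (by positivity)⟩
  calc (∑ p, |N * ∑ j, X (u j) p - k * ∑ i, X i p|) ^ 2
      ≤ Fintype.card κ * ∑ p, |N * ∑ j, X (u j) p - k * ∑ i, X i p| ^ 2 :=
        sq_sum_le_card_mul_sum_sq
    _ ≤ Fintype.card κ * (k * (N ^ 2 * Fintype.card κ)) := by simp only [sq_abs]; gcongr
    _ = (√k * N * Fintype.card κ) ^ 2 := by rw [mul_pow, mul_pow, Real.sq_sqrt k.cast_nonneg]; ring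

lemma card_filter_lt_mul_le_sum {ι : Type*} [Fintype ι] {f : ι → ℝ} (hf : ∀ i, 0 ≤ f i) (r : ℝ) :
    #{i | r < f i} * r ≤ ∑ i, f i := calc
  _ ≤ ∑ i with r < f i, f i := by
    simpa using card_nsmul_le_sum _ f r fun i hi ↦ (mem_filter.1 hi).2.le
  _ ≤ ∑ i, f i := sum_le_univ_sum_of_nonneg hf

lemma exists_forall_notMem_sum_abs_sample_sub_le {ι τ κ : Type*} [Fintype ι] [Nonempty ι]
    [Fintype τ] [Fintype κ] [Nonempty κ] {X : ι → τ → κ → ℝ} (hX : ∀ i t x, |X i t x| ≤ 1) {ρ : ℝ}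
    (hρ : 0 < ρ) {k : ℕ} (hk : 1 ≤ ρ ^ 2 * √k) :
    ∃ (u : Fin k → ι) (E : Finset τ), #E ≤ ρ * Fintype.card τ ∧ ∀ t ∉ E,
      ∑ x, |Fintype.card ι * ∑ j, X (u j) t x - k * ∑ i, X i t x| ≤
        k * (ρ * Fintype.card ι * Fintype.card κ) := by
  have hsqrt : 0 < √(k : ℝ) := pos_of_mul_pos_right (by linarith) (sq_nonneg ρ)
  obtain ⟨u, hu⟩ := exists_sum_abs_sample_sub_le (fun i (p : τ × κ) ↦ hX i p.1 p.2) k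
  set N : ℝ := (Fintype.card ι : ℝ)
  have : 0 < N := Nat.cast_pos.2 Fintype.card_pos
  set K : ℝ := (Fintype.card κ : ℝ)
  have : 0 < K := Nat.cast_pos.2 Fintype.card_pos
  let err (t : τ) : ℝ := ∑ x, |N * ∑ j, X (u j) t x - k * ∑ i, X i t x|
  have sum_err : ∑ t, err t ≤ √k * N * (Fintype.card τ * K) := by
    simpa only [Fintype.sum_prod_type, Fintype.card_prod, Nat.cast_mul] using hu
  set E : Finset τ := {t | k * (ρ * N * K) < err t}
  have markov : #E * (k * (ρ * N * K)) ≤ √k * N * (Fintype.card τ * K) :=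
    (card_filter_lt_mul_le_sum (fun t ↦ sum_nonneg fun x _ ↦ abs_nonneg _) _).trans sum_err
  have card_mul_le : #E * (ρ * √k) ≤ Fintype.card τ := by
    refine le_of_mul_le_mul_right ?_ (by positivity : 0 < √k * N * K)
    calc _ = #E * ((√k * √k) * (ρ * N * K)) := by ring
      _ = #E * (k * (ρ * N * K)) := by rw [Real.mul_self_sqrt k.cast_nonneg]
      _ ≤ _ := markov
      _ = _ := by ring
  refine ⟨u, E, ?_, fun t ht ↦ by simpa [E] using ht⟩
  calc (#E : ℝ) ≤ #E * (ρ ^ 2 * √k) := le_mul_of_one_le_right (Nat.cast_nonneg _) hk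
    _ = ρ * (#E * (ρ * √k)) := by ring
    _ ≤ ρ * Fintype.card τ := by gcongr

lemma exists_coloring_sum_abs_sub_le {ι τ κ : Type*} [Fintype ι] [Nonempty ι] [Fintype τ]
    [Fintype κ] [Nonempty κ] (χ : τ → ι → Prop) [∀ t, DecidablePred (χ t)] {ψ : ι → κ → ℝ}
    (hψ : ∀ i x, |ψ i x| ≤ 1) {ρ : ℝ} (hρ : 0 < ρ) {k : ℕ} (hk : 1 ≤ ρ ^ 2 * √k) :
    ∃ (c : τ → Fin k → Bool) (E : Finset τ), #E ≤ ρ * Fintype.card τ ∧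
      ∀ s ∉ E, ∀ t ∉ E, c s = c t →
        ∑ x, |∑ i with χ s i, ψ i x - ∑ i with χ t i, ψ i x| ≤
          2 * ρ * Fintype.card ι * Fintype.card κ := by
  have hk0 : (0 : ℝ) < k := Real.sqrt_pos.1 (pos_of_mul_pos_right (by linarith) (sq_nonneg ρ))
  let X (i : ι) (t : τ) (x : κ) : ℝ := if χ t i then ψ i x else 0
  have hX (i : ι) (t : τ) (x : κ) : |X i t x| ≤ 1 := by
    by_cases h : χ t i <;> simp [X, h, hψ]
  obtain ⟨u, E, hE, err_le⟩ := exists_forall_notMem_sum_abs_sample_sub_le hX hρ hk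
  refine ⟨fun t j ↦ decide (χ t (u j)), E, hE, fun s hs t ht hst ↦ ?_⟩
  have same_sample (x : κ) : ∑ j, X (u j) s x = ∑ j, X (u j) t x :=
    sum_congr rfl fun j _ ↦ if_congr (decide_eq_decide.1 (congrFun hst j)) rfl rfl
  refine le_of_mul_le_mul_left ?_ hk0
  calc k * ∑ x, |∑ i with χ s i, ψ i x - ∑ i with χ t i, ψ i x|
      = ∑ x, |k * ∑ i, X i s x - k * ∑ i, X i t x| := by
        rw [mul_sum]
        refine sum_congr rfl fun x _ ↦ ?_
        rw [← mul_sub, abs_mul, abs_of_pos hk0, sum_filter, sum_filter]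
    _ ≤ ∑ x, |Fintype.card ι * ∑ j, X (u j) s x - k * ∑ i, X i s x| +
          ∑ x, |Fintype.card ι * ∑ j, X (u j) t x - k * ∑ i, X i t x| := by
        rw [← sum_add_distrib]
        refine sum_le_sum fun x _ ↦ ?_
        rw [← same_sample, abs_sub_comm _ (k * ∑ i, X i s x)]
        exact abs_sub_le _ _ _
    _ ≤ k * (2 * ρ * Fintype.card ι * Fintype.card κ) := by linarith [err_le s hs, err_le t ht]

end Sampling

section TranslationDist

open Finset

variable {G : Type*} [Group G] [Fintype G]

/-- The `ℓ¹`-distance between `f` and its left translate by `t`, which measures how far `t` is from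
being a period of `f`. -/
def translationDist (f : G → ℝ) (t : G) : ℝ :=
  ∑ x, |f (t * x) - f x|

lemma sum_abs_sub_mul_left_eq_translationDist (f : G → ℝ) (s t : G) :
    ∑ x, |f (s * t * x) - f (t * x)| = translationDist f s := by
  simpa only [mul_assoc, Equiv.coe_mulLeft] using!
    Equiv.sum_comp (Equiv.mulLeft t) fun x ↦ |f (s * x) - f x|

lemma abs_sum_sum_mul_sub_le (f : G → ℝ) (A C : Finset G) :
    |∑ t ∈ A, ∑ x ∈ C, f (t * x) - #A * ∑ x ∈ C, f x| ≤ ∑ t ∈ A, translationDist f t := calc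
  _ = |∑ t ∈ A, ∑ x ∈ C, (f (t * x) - f x)| := by simp [sum_sub_distrib]
  _ ≤ ∑ t ∈ A, ∑ x ∈ C, |f (t * x) - f x| :=
    (abs_sum_le_sum_abs _ _).trans <| sum_le_sum fun t _ ↦ abs_sum_le_sum_abs _ _
  _ ≤ ∑ t ∈ A, translationDist f t :=
    sum_le_sum fun t _ ↦ sum_le_univ_sum_of_nonneg fun x ↦ abs_nonneg _

lemma translationDist_le {f : G → ℝ} {M : ℝ} (hf : ∀ x, f x ∈ Set.Icc 0 M) (t : G) :
    translationDist f t ≤ Fintype.card G * M := by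
  simpa [translationDist] using sum_le_card_nsmul univ (fun x ↦ |f (t * x) - f x|) M
    fun x _ ↦ abs_sub_le_of_nonneg_of_le (hf _).1 (hf _).2 (hf _).1 (hf _).2

lemma sum_translationDist_le {f : G → ℝ} {M : ℝ} (hf : ∀ x, f x ∈ Set.Icc 0 M) {r : ℝ}
    (hr : 0 ≤ r) (A : Finset G) :
    ∑ t ∈ A, translationDist f t ≤
      Fintype.card G * r + #{t ∈ A | r < translationDist f t} * (Fintype.card G * M) := by
  rw [← sum_filter_not_add_sum_filter A (r < translationDist f ·)]
  gcongr
  · calc _ ≤ #{t ∈ A | ¬ r < translationDist f t} * r := by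
          simpa using sum_le_card_nsmul _ (translationDist f) r
            fun t ht ↦ not_lt.1 (mem_filter.1 ht).2
      _ ≤ Fintype.card G * r := by gcongr; exact card_le_univ _
  · simpa using sum_le_card_nsmul _ (translationDist f) _ fun t _ ↦ translationDist_le hf t

end TranslationDist

section Convolution

open Finset
open scoped Combinatorics.Additive

variable {G : Type*} [Group G] [DecidableEq G]

lemma convolution_eq_card_filter_left (A B : Finset G) (x : G) :
    A.convolution B x = #{a ∈ A | a⁻¹ * x ∈ B} := by
  rw [← card_inter_smul_inv, ← filter_mem_eq_inter]
  simp [← inv_smul_mem_iff]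

lemma convolution_eq_card_filter_right (A B : Finset G) (x : G) :
    A.convolution B x = #{b ∈ B | x * b⁻¹ ∈ A} := by
  rw [← inv_inv x, convolution_inv, convolution_eq_card_filter_left]
  exact card_equiv (.inv G) (by simp)

lemma sum_convolution_mul_left (A B C : Finset G) (x : G) :
    ∑ c ∈ C, (A.convolution B (c * x) : ℝ) = ∑ y ∈ B⁻¹, (C⁻¹.convolution A (x * y) : ℝ) := by
  simp only [convolution_eq_card_filter_right A B, convolution_eq_card_filter_left C⁻¹ A,
    card_filter, Nat.cast_sum, sum_inv_index, inv_inv, mul_assoc]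
  exact sum_comm

lemma sum_convolution_eq_sum_card (A B C : Finset G) :
    ∑ c ∈ C, (A.convolution B c : ℝ) = ∑ a ∈ A, (#{b ∈ B | a * b ∈ C} : ℝ) := by
  have card_eq (a : G) : #{b ∈ B | a * b ∈ C} = #{c ∈ C | a⁻¹ * c ∈ B} :=
    card_equiv (Equiv.mulLeft a) (by simp [and_comm])
  simp only [convolution_eq_card_filter_left, card_eq, card_filter, Nat.cast_sum]
  exact sum_comm

lemma sum_sum_mul_eq_sum_convolution_mul (A B : Finset G) (f : G → ℝ) :
    ∑ a ∈ A, ∑ b ∈ B, f (a * b) = ∑ x ∈ A * B, A.convolution B x * f x := by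
  rw [← sum_product', ← sum_fiberwise_of_maps_to fun ab hab ↦
    mul_mem_mul (mem_product.1 hab).1 (mem_product.1 hab).2]
  refine sum_congr rfl fun x _ ↦ ?_
  rw [sum_congr rfl fun ab hab ↦ by rw [(mem_filter.1 hab).2], sum_const, nsmul_eq_mul,
    card_mul_eq]

lemma sum_sum_convolution_mul (A B : Finset G) :
    ∑ a ∈ A, ∑ b ∈ B, (A.convolution B (a * b) : ℝ) = Eₘ[A, B] := by
  rw [sum_sum_mul_eq_sum_convolution_mul A B fun x ↦ (A.convolution B x : ℝ), mulEnergy_eq_sum_sq']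
  simp [sq, card_mul_eq]

variable [Fintype G]

lemma convolution_mul_left_eq_card (A B : Finset G) (t x : G) :
    A.convolution B (t * x) = #{u | t * u ∈ A ∧ u⁻¹ * x ∈ B} := by
  rw [convolution_eq_card_filter_left]
  exact (card_equiv (Equiv.mulLeft t) (by simp [mul_assoc])).symm

lemma mul_card_pow_three_le_mulEnergy {A B : Finset G} {δ : ℝ} (hδ : 0 ≤ δ)
    (hA : δ * Fintype.card G ≤ #A) (hB : δ * Fintype.card G ≤ #B) :
    δ ^ 4 * (Fintype.card G : ℝ) ^ 3 ≤ Eₘ[A, B] := by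
  set N : ℝ := (Fintype.card G : ℝ) with hN
  have hN0 : 0 < N := Nat.cast_pos.2 Fintype.card_pos
  refine le_of_mul_le_mul_left ?_ hN0
  calc N * (δ ^ 4 * N ^ 3) = (δ * N) ^ 2 * (δ * N) ^ 2 := by ring
    _ ≤ (#A : ℝ) ^ 2 * #B ^ 2 := by gcongr
    _ ≤ #(A * B) * Eₘ[A, B] := mod_cast le_card_mul_mul_mulEnergy A B
    _ ≤ N * Eₘ[A, B] := by gcongr; exact Nat.cast_le.2 (card_le_univ _)

end Convolution

section AlmostPeriods

open Finset

variable {G : Type*} [Group G] [Fintype G] [DecidableEq G]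

/-- Product-richness with densities measured in the whole group instead of in `A`; in this form
the property passes to all subsets of `A`. -/
def AmbientProductRich (A : Finset G) (ε : ℝ) : Prop :=
  ∀ A₀ ⊆ A, ε * Fintype.card G ≤ #A₀ → (A₀ * A₀ ∩ A₀).Nonempty

lemma ProductRich.ambientProductRich {A : Finset G} {ε : ℝ} (hA : ProductRich A ε) (hε : 0 ≤ ε) :
    AmbientProductRich A ε := fun A₀ hA₀ hcard ↦
  hA A₀ hA₀ <| hcard.trans' <|
    mul_le_mul_of_nonneg_left (Nat.cast_le.2 (card_le_univ A)) hε

lemma AmbientProductRich.mono {A B : Finset G} {ε ε' : ℝ} (hA : AmbientProductRich A ε)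
    (hBA : B ⊆ A) (hε : ε ≤ ε') : AmbientProductRich B ε' := fun A₀ hA₀ hcard ↦
  hA A₀ (hA₀.trans hBA) <| hcard.trans' <| mul_le_mul_of_nonneg_right hε (Nat.cast_nonneg _)

lemma card_filter_lt_translationDist_le {A : Finset G} {ε : ℝ} (hA : AmbientProductRich A ε)
    {f : G → ℝ} {r : ℝ} {γ : Type*} [Fintype γ] (c : G → γ) (E : Finset G)
    (hc : ∀ s ∉ E, ∀ t ∉ E, c s = c t → ∑ x, |f (s * x) - f (t * x)| ≤ r) :
    (#{t ∈ A | r < translationDist f t} : ℝ) ≤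
      #E + Fintype.card γ * (ε * Fintype.card G) := by
  have : DecidableEq γ := Classical.decEq γ
  set B : Finset G := {t ∈ A | r < translationDist f t}
  have color_class_small (i : γ) : (#{t ∈ B \ E | c t = i} : ℝ) ≤ ε * Fintype.card G := by
    by_contra! hlarge
    obtain ⟨z, hz⟩ := hA {t ∈ B \ E | c t = i}
      ((filter_subset _ _).trans (sdiff_subset.trans (filter_subset _ _))) hlarge.le
    obtain ⟨hmul, hxy⟩ := mem_inter.1 hz
    obtain ⟨x, hx, y, hy, rfl⟩ := mem_mul.1 hmul
    simp only [mem_filter, mem_sdiff, B] at hx hy hxy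
    have := hc (x * y) hxy.1.2 y hy.1.2 (hxy.2.trans hy.2.symm)
    rw [sum_abs_sub_mul_left_eq_translationDist] at this
    exact hx.1.1.2.not_ge this
  have card_le : #B ≤ #E + ∑ i, #{t ∈ B \ E | c t = i} := by
    rw [← card_eq_sum_card_fiberwise fun _ _ ↦ mem_coe.2 (mem_univ _)]
    have := card_le_card_sdiff_add_card (s := B) (t := E)
    omega
  calc (#B : ℝ) ≤ #E + ∑ i, (#{t ∈ B \ E | c t = i} : ℝ) := mod_cast card_le
    _ ≤ #E + ∑ _i : γ, ε * Fintype.card G := by gcongr with i; exact color_class_small i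
    _ = _ := by rw [sum_const, card_univ, nsmul_eq_mul]

lemma exists_coloring_convolution (S T : Finset G) {ρ : ℝ} (hρ : 0 < ρ) {k : ℕ}
    (hk : 1 ≤ ρ ^ 2 * √k) :
    ∃ (c : G → Fin k → Bool) (E : Finset G), #E ≤ ρ * Fintype.card G ∧
      ∀ s ∉ E, ∀ t ∉ E, c s = c t →
        ∑ x, |(S.convolution T (s * x) : ℝ) - S.convolution T (t * x)| ≤
          2 * ρ * (Fintype.card G : ℝ) ^ 2 := by
  let ψ (u x : G) : ℝ := if u⁻¹ * x ∈ T then 1 else 0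
  have hψ (u x : G) : |ψ u x| ≤ 1 := by by_cases h : u⁻¹ * x ∈ T <;> simp [ψ, h]
  have convolution_eq (t x : G) : (S.convolution T (t * x) : ℝ) = ∑ u with t * u ∈ S, ψ u x := by
    simp [convolution_mul_left_eq_card, ψ, filter_filter]
  simpa only [convolution_eq, sq, mul_assoc] using
    exists_coloring_sum_abs_sub_le (fun t u ↦ t * u ∈ S) hψ hρ hk

lemma exists_sum_translationDist_convolution_le {θ : ℝ} (hθ : 0 < θ) : ∃ ε > 0,
    ∀ {G : Type u} [Group G] [Fintype G] [DecidableEq G] {A : Finset G},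
      AmbientProductRich A ε → ∀ S T : Finset G,
        ∑ t ∈ A, translationDist (fun x ↦ (S.convolution T x : ℝ)) t ≤
          θ * (Fintype.card G : ℝ) ^ 3 := by
  set ρ := θ / 4 with hρ
  have hρ0 : 0 < ρ := by positivity
  obtain ⟨k, hk⟩ := exists_nat_ge ((ρ ^ 2)⁻¹ ^ 2)
  have hk1 : 1 ≤ ρ ^ 2 * √k := by
    rw [← inv_le_iff_one_le_mul₀' (by positivity)]
    exact Real.le_sqrt_of_sq_le hk
  refine ⟨ρ / 2 ^ k, by positivity, fun {G} _ _ _ A hA S T ↦ ?_⟩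
  set N : ℝ := (Fintype.card G : ℝ)
  set f : G → ℝ := fun x ↦ S.convolution T x
  have hf (x : G) : f x ∈ Set.Icc 0 N :=
    ⟨Nat.cast_nonneg _, Nat.cast_le.2 (convolution_le_card_left.trans (card_le_univ S))⟩
  obtain ⟨c, E, hE, hc⟩ := exists_coloring_convolution S T hρ0 hk1
  have card_far : (#{t ∈ A | 2 * ρ * N ^ 2 < translationDist f t} : ℝ) ≤ 2 * ρ * N := calc
    _ ≤ #E + Fintype.card (Fin k → Bool) * (ρ / 2 ^ k * N) :=
      card_filter_lt_translationDist_le hA c E hc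
    _ = #E + ρ * N := by
      simp only [Fintype.card_fun, Fintype.card_bool, Fintype.card_fin, Nat.cast_pow,
        Nat.cast_ofNat]
      field
    _ ≤ 2 * ρ * N := by linarith
  calc ∑ t ∈ A, translationDist f t
      ≤ N * (2 * ρ * N ^ 2) + #{t ∈ A | 2 * ρ * N ^ 2 < translationDist f t} * (N * N) :=
        sum_translationDist_le hf (by positivity) A
    _ ≤ N * (2 * ρ * N ^ 2) + 2 * ρ * N * (N * N) := by gcongr
    _ = θ * N ^ 3 := by rw [hρ]; ring

end AlmostPeriods

section Triples

open Finset
open scoped Combinatorics.Additive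

variable {G : Type*} [Group G] [Fintype G] [DecidableEq G]

lemma card_mul_sum_convolution_ge {A B C : Finset G} {Δ : ℝ}
    (hA : ∑ t ∈ A, translationDist (fun x ↦ (A.convolution B x : ℝ)) t ≤ Δ)
    (hB : ∑ t ∈ B, translationDist (fun x ↦ (A⁻¹.convolution A x : ℝ)) t ≤ Δ)
    (hC : ∑ t ∈ C, translationDist (fun x ↦ (A⁻¹.convolution A x : ℝ)) t ≤ Δ) :
    #C * (Eₘ[A, B] : ℝ) ≤
      #A * #B * ∑ c ∈ C, (A.convolution B c : ℝ) + (2 * #B + #C) * Δ := by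
  let f (x : G) : ℝ := A.convolution B x
  let p (x : G) : ℝ := A⁻¹.convolution A x
  have average_A := abs_le.1 ((abs_sum_sum_mul_sub_le f A C).trans hA)
  have average_B := abs_le.1 ((abs_sum_sum_mul_sub_le p B B⁻¹).trans hB)
  have average_C := abs_le.1 ((abs_sum_sum_mul_sub_le p C B⁻¹).trans hC)
  have sum_C_eq : ∑ a ∈ A, ∑ c ∈ C, f (a * c) = ∑ c ∈ C, ∑ y ∈ B⁻¹, p (c * y) := by
    rw [sum_comm]
    exact sum_congr rfl fun c _ ↦ sum_convolution_mul_left A B A c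
  have sum_B_eq : ∑ b ∈ B, ∑ y ∈ B⁻¹, p (b * y) = Eₘ[A, B] := by
    rw [← sum_sum_convolution_mul, sum_comm (s := A)]
    exact sum_congr rfl fun b _ ↦ (sum_convolution_mul_left A B A b).symm
  rw [sum_C_eq] at average_A
  rw [sum_B_eq] at average_B
  set W := ∑ y ∈ B⁻¹, p y
  calc #C * (Eₘ[A, B] : ℝ) ≤ #C * (#B * W + Δ) := by gcongr; linarith
    _ = #B * (#C * W) + #C * Δ := by ring
    _ ≤ #B * (#A * ∑ c ∈ C, f c + 2 * Δ) + #C * Δ := by gcongr; linarith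
    _ = _ := by ring

lemma exists_sum_convolution_ge {δ : ℝ} (hδ : 0 < δ) : ∃ ε > 0,
    ∀ {G : Type u} [Group G] [Fintype G] [DecidableEq G] {A B C : Finset G},
      AmbientProductRich A ε → AmbientProductRich B ε → AmbientProductRich C ε →
      δ * Fintype.card G ≤ #A → δ * Fintype.card G ≤ #B → δ * Fintype.card G ≤ #C →
        δ ^ 5 / 2 * (Fintype.card G : ℝ) ^ 2 ≤ ∑ c ∈ C, (A.convolution B c : ℝ) := by
  obtain ⟨ε, hε, almost_invariant⟩ :=
    exists_sum_translationDist_convolution_le (θ := δ ^ 5 / 6) (by positivity)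
  refine ⟨ε, hε, fun {G} _ _ _ A B C richA richB richC denseA denseB denseC ↦ ?_⟩
  set N : ℝ := (Fintype.card G : ℝ)
  have : 0 < N := Nat.cast_pos.2 Fintype.card_pos
  have card_le (S : Finset G) : (#S : ℝ) ≤ N := Nat.cast_le.2 (card_le_univ S)
  set T : ℝ := ∑ c ∈ C, (A.convolution B c : ℝ)
  have upper : #C * (Eₘ[A, B] : ℝ) ≤ #A * #B * T + (2 * #B + #C) * (δ ^ 5 / 6 * N ^ 3) :=
    card_mul_sum_convolution_ge (almost_invariant richA _ _) (almost_invariant richB _ _)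
      (almost_invariant richC _ _)
  have hT : 0 ≤ T := sum_nonneg fun c _ ↦ Nat.cast_nonneg _
  refine le_of_mul_le_mul_left (a := N ^ 2) ?_ (by positivity)
  have := calc
    δ ^ 5 * N ^ 4 = δ * N * (δ ^ 4 * N ^ 3) := by ring
    _ ≤ #C * (Eₘ[A, B] : ℝ) := by
      gcongr; exact mul_card_pow_three_le_mulEnergy hδ.le denseA denseB
    _ ≤ #A * #B * T + (2 * #B + #C) * (δ ^ 5 / 6 * N ^ 3) := upper
    _ ≤ N * N * T + (2 * N + N) * (δ ^ 5 / 6 * N ^ 3) := by gcongr <;> exact card_le _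
  linarith

lemma exists_card_filter_card_lt_le {δ : ℝ} (hδ : 0 < δ) : ∃ ε > 0, ∃ c > 0,
    ∀ {G : Type u} [Group G] [Fintype G] [DecidableEq G] {A B C : Finset G},
      AmbientProductRich A ε → AmbientProductRich B ε → AmbientProductRich C ε →
      δ * Fintype.card G ≤ #B → δ * Fintype.card G ≤ #C →
        (#{x ∈ A | (#{y ∈ B | x * y ∈ C} : ℝ) < c * Fintype.card G} : ℝ) ≤
          δ * Fintype.card G := by
  obtain ⟨ε, hε, sum_ge⟩ := exists_sum_convolution_ge hδ
  refine ⟨ε, hε, δ ^ 5 / 2, by positivity,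
    fun {G} _ _ _ A B C richA richB richC denseB denseC ↦ ?_⟩
  set N : ℝ := (Fintype.card G : ℝ)
  have : 0 < N := Nat.cast_pos.2 Fintype.card_pos
  set A₀ : Finset G := {x ∈ A | (#{y ∈ B | x * y ∈ C} : ℝ) < δ ^ 5 / 2 * N}
  by_contra! denseA₀
  have hA₀ : A₀.Nonempty := card_pos.1 <| Nat.cast_pos.1 <| denseA₀.trans' (by positivity)
  have : ∑ c ∈ C, (A₀.convolution B c : ℝ) < δ ^ 5 / 2 * N ^ 2 := calc
    _ = ∑ a ∈ A₀, (#{b ∈ B | a * b ∈ C} : ℝ) := sum_convolution_eq_sum_card A₀ B C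
    _ < ∑ _a ∈ A₀, δ ^ 5 / 2 * N := sum_lt_sum_of_nonempty hA₀ fun a ha ↦ (mem_filter.1 ha).2
    _ = #A₀ * (δ ^ 5 / 2 * N) := by rw [sum_const, nsmul_eq_mul]
    _ ≤ N * (δ ^ 5 / 2 * N) := by gcongr; exact Nat.cast_le.2 (card_le_univ A₀)
    _ = _ := by ring
  exact this.not_ge <|
    sum_ge (richA.mono (filter_subset _ _) le_rfl) richB richC denseA₀.le denseB denseC

end Triples

section ProductTuples

open Finset

variable {n : ℕ}

lemma prodF_map_succ {G : Type*} [Monoid G] (a : Fin (n + 1) → G) (F : Finset (Fin n)) :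
    prodF a (F.map (Fin.succEmb n)) = prodF (Fin.tail a) F := by
  have sort_map : (F.map (Fin.succEmb n)).sort (· ≤ ·) = (F.sort (· ≤ ·)).map Fin.succ :=
    (map_sort (Fin.succEmb n) F (· ≤ ·) (· ≤ ·) fun i _ j _ ↦ by simp).symm
  rw [prodF, sort_map, List.map_map]
  rfl

lemma prodF_insert_zero {G : Type*} [Monoid G] (a : Fin (n + 1) → G) (F : Finset (Fin n)) :
    prodF a (insert 0 (F.map (Fin.succEmb n))) = a 0 * prodF (Fin.tail a) F := by
  rw [← prodF_map_succ, prodF, sort_insert _ (fun i _ ↦ Fin.zero_le i) (by simp), List.map_cons,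
    List.prod_cons, prodF]

lemma forall_finset_fin_succ_iff {P : Finset (Fin (n + 1)) → Prop} :
    (∀ F, P F) ↔ ∀ F : Finset (Fin n),
      P (F.map (Fin.succEmb n)) ∧ P (insert 0 (F.map (Fin.succEmb n))) := by
  refine ⟨fun h F ↦ ⟨h _, h _⟩, fun h F ↦ ?_⟩
  have tail_or : F = ({i | i.succ ∈ F} : Finset (Fin n)).map (Fin.succEmb n) ∨
      F = insert 0 (({i | i.succ ∈ F} : Finset (Fin n)).map (Fin.succEmb n)) := by
    by_cases h0 : (0 : Fin (n + 1)) ∈ F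
    · exact .inr <| Finset.ext <| Fin.cases (by simp [h0]) (by simp)
    · exact .inl <| Finset.ext <| Fin.cases (by simp [h0]) (by simp)
  rcases tail_or with hF | hF
  · exact hF ▸ (h _).1
  · exact hF ▸ (h _).2

/-- The tuples all of whose ordered subproducts `prodF a F` lie in the prescribed sets `A F`. -/
def productTuples {G : Type*} [Monoid G] (A : Finset (Fin n) → Finset G) : Set (Fin n → G) :=
  {a | ∀ F : Finset (Fin n), F.Nonempty → prodF a F ∈ A F}

/-- The sets that the tail of a tuple with first entry `x` has to satisfy: `y` is admissible for
`F` if `y` and `x * y` satisfy the constraints of `A` on the shift of `F` by one, without and with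
the index `0`. -/
def tailFamily {G : Type*} [Monoid G] [DecidableEq G] (A : Finset (Fin (n + 1)) → Finset G)
    (x : G) (F : Finset (Fin n)) : Finset G :=
  {y ∈ A (F.map (Fin.succEmb n)) | x * y ∈ A (insert 0 (F.map (Fin.succEmb n)))}

lemma mem_productTuples_succ_iff {G : Type*} [Monoid G] [DecidableEq G]
    {A : Finset (Fin (n + 1)) → Finset G} {a : Fin (n + 1) → G} :
    a ∈ productTuples A ↔ a 0 ∈ A {0} ∧ Fin.tail a ∈ productTuples (tailFamily A (a 0)) := by
  simp only [productTuples, tailFamily, Set.mem_ofPred_eq, mem_filter, forall_finset_fin_succ_iff,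
    prodF_map_succ, prodF_insert_zero, map_nonempty, insert_nonempty, true_imp_iff]
  refine ⟨fun h ↦ ⟨by simpa [prodF] using (h ∅).2, fun F hF ↦ ⟨(h F).1 hF, (h F).2⟩⟩,
    fun h F ↦ ⟨fun hF ↦ (h.2 F hF).1, ?_⟩⟩
  rcases F.eq_empty_or_nonempty with rfl | hF
  · simpa [prodF] using h.1
  · exact (h.2 F hF).2

lemma card_productTuples_succ {G : Type*} [Monoid G] [Finite G] [DecidableEq G]
    (A : Finset (Fin (n + 1)) → Finset G) :
    Nat.card (productTuples A) = ∑ x ∈ A {0}, Nat.card (productTuples (tailFamily A x)) := by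
  let e : productTuples A ≃ Σ x : A {0}, productTuples (tailFamily A x) :=
    { toFun := fun a ↦ ⟨⟨a.1 0, (mem_productTuples_succ_iff.1 a.2).1⟩,
        ⟨Fin.tail a.1, (mem_productTuples_succ_iff.1 a.2).2⟩⟩
      invFun := fun s ↦ ⟨Fin.cons s.1 s.2, mem_productTuples_succ_iff.2 ⟨s.1.2, s.2.2⟩⟩
      left_inv := fun a ↦ Subtype.ext (Fin.cons_self_tail a.1)
      right_inv := fun _ ↦ rfl }
  rw [Nat.card_congr e, Nat.card_sigma,
    sum_coe_sort (A {0}) fun x ↦ Nat.card (productTuples (tailFamily A x))]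

lemma card_sub_card_mul_le_card_filter_forall {α ι : Type*} [Fintype ι] (S : Finset α)
    (p : ι → α → Prop) [∀ i, DecidablePred (p i)] {b : ℝ}
    (hb : ∀ i, (#{x ∈ S | ¬ p i x} : ℝ) ≤ b) :
    #S - Fintype.card ι * b ≤ #{x ∈ S | ∀ i, p i x} := by
  classical
  have filter_not_subset : S.filter (fun x ↦ ¬ ∀ i, p i x) ⊆
      univ.biUnion fun i ↦ {x ∈ S | ¬ p i x} := fun x hx ↦ by simpa using hx
  have card_filter_not : (#{x ∈ S | ¬ ∀ i, p i x} : ℝ) ≤ Fintype.card ι * b := calc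
    _ ≤ ∑ i, (#{x ∈ S | ¬ p i x} : ℝ) :=
      mod_cast (card_le_card filter_not_subset).trans card_biUnion_le
    _ ≤ _ := by simpa using sum_le_card_nsmul univ _ b fun i _ ↦ hb i
  have card_split : (#{x ∈ S | ∀ i, p i x} : ℝ) + #{x ∈ S | ¬ ∀ i, p i x} = #S :=
    mod_cast card_filter_add_card_filter_not (s := S) fun x ↦ ∀ i, p i x
  linarith

lemma exists_card_filter_forall_card_tailFamily_ge (n : ℕ) {δ : ℝ} (hδ : 0 < δ) :
    ∃ ε > 0, ∃ c > (0 : ℝ),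
      ∀ {G : Type u} [Group G] [Fintype G] [DecidableEq G] {A : Finset (Fin (n + 1)) → Finset G},
        (∀ F : Finset (Fin (n + 1)), F.Nonempty → δ * Fintype.card G ≤ #(A F)) →
        (∀ F : Finset (Fin (n + 1)), F.Nonempty → AmbientProductRich (A F) ε) →
          δ / 2 * Fintype.card G ≤ #{x ∈ A {0} | ∀ F : Finset (Fin n), F.Nonempty →
            c * Fintype.card G ≤ #(tailFamily A x F)} := by
  obtain ⟨ε, hε, c, hc, few_bad⟩ :=
    exists_card_filter_card_lt_le (δ := δ / (2 * 2 ^ n)) (by positivity)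
  refine ⟨ε, hε, c, hc, fun {G} _ _ _ A dense rich ↦ ?_⟩
  have dense' (F : Finset (Fin (n + 1))) (hF : F.Nonempty) :
      δ / (2 * 2 ^ n) * Fintype.card G ≤ #(A F) := by
    refine (dense F hF).trans' ?_
    gcongr
    exact div_le_self hδ.le (by linarith [one_le_pow₀ (one_le_two (α := ℝ)) (n := n)])
  have card_bad (F : Finset (Fin n)) :
      (#{x ∈ A {0} | ¬ (F.Nonempty → c * Fintype.card G ≤ #(tailFamily A x F))} : ℝ) ≤
        δ / (2 * 2 ^ n) * Fintype.card G := by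
    by_cases hF : F.Nonempty
    · simpa only [hF, true_imp_iff, not_le] using!
        few_bad (rich _ (singleton_nonempty 0)) (rich _ hF.map)
          (rich _ (insert_nonempty _ _)) (dense' _ hF.map) (dense' _ (insert_nonempty _ _))
    · simp only [hF, false_imp_iff, not_true_eq_false, filter_false, card_empty, Nat.cast_zero]
      positivity
  calc δ / 2 * Fintype.card G
      = δ * Fintype.card G -
          Fintype.card (Finset (Fin n)) * (δ / (2 * 2 ^ n) * Fintype.card G) := by
        simp only [Fintype.card_finset, Fintype.card_fin, Nat.cast_pow, Nat.cast_ofNat]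
        field
    _ ≤ #(A {0}) - Fintype.card (Finset (Fin n)) * (δ / (2 * 2 ^ n) * Fintype.card G) := by
        gcongr; exact dense _ (singleton_nonempty 0)
    _ ≤ _ := card_sub_card_mul_le_card_filter_forall _ _ card_bad

theorem exists_card_productTuples_ge (n : ℕ) {δ : ℝ} (hδ : 0 < δ) : ∃ ε > 0, ∃ η > 0,
    ∀ {G : Type u} [Group G] [Fintype G] [DecidableEq G] {A : Finset (Fin n) → Finset G},
      (∀ F : Finset (Fin n), F.Nonempty → δ * Fintype.card G ≤ #(A F)) →
      (∀ F : Finset (Fin n), F.Nonempty → AmbientProductRich (A F) ε) →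
        η * (Fintype.card G : ℝ) ^ n ≤ Nat.card (productTuples A) := by
  induction n generalizing δ with
  | zero =>
    refine ⟨1, one_pos, 1, one_pos, fun {G} _ _ _ A _ _ ↦ ?_⟩
    have : Nonempty (productTuples A) := ⟨Fin.elim0, fun F ⟨i, _⟩ ↦ i.elim0⟩
    simp
  | succ n ih =>
    obtain ⟨ε₁, hε₁, c, hc, many_good⟩ := exists_card_filter_forall_card_tailFamily_ge n hδ
    obtain ⟨ε₂, hε₂, η, hη, many_tails⟩ := ih hc
    refine ⟨min ε₁ ε₂, lt_min hε₁ hε₂, δ / 2 * η, by positivity, fun {G} _ _ _ A dense rich ↦ ?_⟩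
    set good : Finset G := {x ∈ A {0} | ∀ F : Finset (Fin n), F.Nonempty →
      c * Fintype.card G ≤ #(tailFamily A x F)}
    have card_good : δ / 2 * Fintype.card G ≤ #good :=
      many_good dense fun F hF ↦ (rich F hF).mono subset_rfl (min_le_left _ _)
    have tails_of_good (x : G) (hx : x ∈ good) :
        η * (Fintype.card G : ℝ) ^ n ≤ Nat.card (productTuples (tailFamily A x)) :=
      many_tails (mem_filter.1 hx).2 fun F hF ↦
        (rich _ hF.map).mono (filter_subset _ _) (min_le_right _ _)
    calc δ / 2 * η * (Fintype.card G : ℝ) ^ (n + 1)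
        = δ / 2 * Fintype.card G * (η * (Fintype.card G : ℝ) ^ n) := by ring
      _ ≤ #good * (η * (Fintype.card G : ℝ) ^ n) := by gcongr
      _ ≤ ∑ x ∈ good, (Nat.card (productTuples (tailFamily A x)) : ℝ) := by
        simpa using card_nsmul_le_sum good _ _ tails_of_good
      _ ≤ ∑ x ∈ A {0}, (Nat.card (productTuples (tailFamily A x)) : ℝ) :=
        sum_le_sum_of_subset_of_nonneg (filter_subset _ _) fun _ _ _ ↦ Nat.cast_nonneg _
      _ = Nat.card (productTuples A) := by rw [card_productTuples_succ, Nat.cast_sum]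

end ProductTuples

lemma exists_pos_forall_le {ι : Type*} [Finite ι] {p : ι → Prop} {δ : ι → ℝ}
    (hδ : ∀ i, p i → 0 < δ i) : ∃ d > 0, ∀ i, p i → d ≤ δ i := by
  have : ∀ᶠ d in nhdsWithin (0 : ℝ) (Set.Ioi 0), ∀ i, p i → d ≤ δ i :=
    Filter.eventually_all.2 fun i ↦ Filter.eventually_imp_distrib_left.2 fun hi ↦
      nhdsWithin_le_nhds (eventually_le_nhds (hδ i hi))
  exact (eventually_mem_nhdsWithin.and this).exists

theorem stmt_10 (n : ℕ) (hn : 2 ≤ n) (δ : Finset (Fin n) → ℝ)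
    (hδ : ∀ F : Finset (Fin n), F.Nonempty → 0 < δ F) :
    ∃ ε : ℝ, 0 < ε ∧ ∃ η : ℝ, 0 < η ∧
      ∀ (G : Type) [Group G] [Fintype G] [DecidableEq G],
        ∀ A : Finset (Fin n) → Finset G,
          (∀ F : Finset (Fin n), F.Nonempty → δ F * Fintype.card G ≤ (A F).card) →
          (∀ F : Finset (Fin n), F.Nonempty → ProductRich (A F) ε) →
          η * (Fintype.card G : ℝ) ^ n ≤
            (Nat.card {a : Fin n → G //
              ∀ F : Finset (Fin n), F.Nonempty → prodF a F ∈ A F} : ℝ) := by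
  obtain ⟨d, hd, d_le⟩ := exists_pos_forall_le hδ
  obtain ⟨ε, hε, η, hη, card_ge⟩ := exists_card_productTuples_ge n hd
  refine ⟨ε, hε, η, hη, fun G _ _ _ A dense rich ↦ card_ge (fun F hF ↦ ?_) fun F hF ↦ ?_⟩
  · exact (mul_le_mul_of_nonneg_right (d_le F hF) (Nat.cast_nonneg _)).trans (dense F hF)
  · exact (rich F hF).ambientProductRich hε.le
end
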